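/- arXiv:2604.26735 — 11 statements merged into one kernel-verified Lean document; each statement's English description precedes it below -/
import Mathlib

section
/- Let h₁,…,h_m : ℝⁿ → ℝ ∪ {+∞} be proper functions with ⋂ᵢ dom hᵢ ≠ ∅ and with a common point x̄ ∈ ⋂ᵢ argmin hᵢ. Suppose each hᵢ is (κᵢ,γᵢ)-strongly quasar-convex with respect to x̄ with κᵢ ∈ (0,1] and γᵢ ≥ 0, and let αᵢ > 0 for each i. Then h(x) := Σᵢ αᵢ hᵢ(x) is (κ,γ)-strongly quasar-convex with respect to x̄, where κ := min₁≤i≤m κᵢ and γ := (1/κ)·Σᵢ αᵢ κᵢ γᵢ. -/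
/-! The sum rule follows termwise once every summand has the same parameter `κ = min κᵢ`, so the point
is that `κᵢ` may be lowered to `κ` while keeping the product `κᵢ γᵢ` (`StronglyQuasarConvexOn.lower`).
Lowering it makes the required quadratic gain larger, because `1 - t / (2 - κ)` decreases in `κ`; the
deficit `t² (κᵢ - κ) / ((2 - κᵢ) (2 - κ)) * (κᵢ γᵢ / 2) ‖x - x̄‖²` is paid for by the gain
`t (κᵢ - κ) (hᵢ x - hᵢ x̄)` in the linear part, thanks to the quadratic growth
`hᵢ x - hᵢ x̄ ≥ κᵢ γᵢ / (2 (2 - κᵢ)) ‖x - x̄‖²` (`StronglyQuasarConvexOn.growth`). -/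

open Set

/-- `(κ,γ)`-strong quasar-convexity of the function represented by `(h, dom)`
with respect to `xbar`. -/
def StronglyQuasarConvexOn {n : ℕ} (dom : Set (EuclideanSpace ℝ (Fin n)))
    (h : EuclideanSpace ℝ (Fin n) → ℝ) (κ γ : ℝ) (xbar : EuclideanSpace ℝ (Fin n)) : Prop :=
  ∀ x ∈ dom, ∀ t ∈ Icc (0:ℝ) 1,
    h (t • xbar + (1 - t) • x) ≤
      κ * t * h xbar + (1 - κ * t) * h x
        - t * (1 - t / (2 - κ)) * (κ * γ / 2) * ‖x - xbar‖ ^ 2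

/-- Quadratic growth away from the minimizer. The full growth is the case `s → 1`; the factor `s < 1`
avoids a limit when `κ = 1`. -/
lemma StronglyQuasarConvexOn.growth {n : ℕ} {dom : Set (EuclideanSpace ℝ (Fin n))}
    {h : EuclideanSpace ℝ (Fin n) → ℝ} {κ γ : ℝ} {xbar : EuclideanSpace ℝ (Fin n)}
    (H : StronglyQuasarConvexOn dom h κ γ xbar) (hdom : Convex ℝ dom) (hxbar : xbar ∈ dom)
    (hmin : ∀ y ∈ dom, h xbar ≤ h y) (hκ : κ ∈ Ioc (0:ℝ) 1) (hγ : 0 ≤ γ)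
    {x : EuclideanSpace ℝ (Fin n)} (hx : x ∈ dom) {s : ℝ} (hs : s ∈ Ico (0:ℝ) 1) :
    s * (κ * γ / 2 / (2 - κ) * ‖x - xbar‖ ^ 2) ≤ h x - h xbar := by
  obtain ⟨hκ0, hκ1⟩ := hκ
  obtain ⟨hs0, hs1⟩ := hs
  rcases hκ1.lt_or_eq with hlt | rfl
  · -- evaluating the inequality at `t = 1` already gives the full growth
    have h1 := H x hx 1 ⟨zero_le_one, le_rfl⟩
    simp only [one_smul, sub_self, zero_smul, add_zero, mul_one, one_mul] at h1
    have h2 : (0:ℝ) < 2 - κ := by linarith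
    have e : 1 - 1 / (2 - κ) = (1 - κ) * (1 / (2 - κ)) := by field_simp; ring
    rw [e] at h1
    have h3 : (1 - κ) * (κ * γ / 2 / (2 - κ) * ‖x - xbar‖ ^ 2) ≤ (1 - κ) * (h x - h xbar) := by
      have : (1 - κ) * (1 / (2 - κ)) * (κ * γ / 2) * ‖x - xbar‖ ^ 2
        = (1 - κ) * (κ * γ / 2 / (2 - κ) * ‖x - xbar‖ ^ 2) := by ring
      linarith
    have h4 := le_of_mul_le_mul_left h3 (by linarith)
    have h5 : 0 ≤ κ * γ / 2 / (2 - κ) * ‖x - xbar‖ ^ 2 := by positivity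
    exact (mul_le_of_le_one_left h5 hs1.le).trans h4
  · have h1 := H x hx s ⟨hs0, hs1.le⟩
    have h2 := hmin _ (hdom hxbar hx hs0 (by linarith : 0 ≤ 1 - s) (by ring))
    have h3 : (1 - s) * (s * (1 * γ / 2 / (2 - 1) * ‖x - xbar‖ ^ 2)) ≤
        (1 - s) * (h x - h xbar) := by
      norm_num at h1 ⊢
      linarith
    exact le_of_mul_le_mul_left h3 (by linarith)

/-- The parameter `κ` may be lowered to `k` as long as the product `κ * γ` is kept. -/
lemma StronglyQuasarConvexOn.lower {n : ℕ} {dom : Set (EuclideanSpace ℝ (Fin n))}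
    {h : EuclideanSpace ℝ (Fin n) → ℝ} {κ γ k : ℝ} {xbar : EuclideanSpace ℝ (Fin n)}
    (H : StronglyQuasarConvexOn dom h κ γ xbar) (hdom : Convex ℝ dom) (hxbar : xbar ∈ dom)
    (hmin : ∀ y ∈ dom, h xbar ≤ h y) (hκ : κ ∈ Ioc (0:ℝ) 1) (hγ : 0 ≤ γ)
    (hk : 0 < k) (hkκ : k ≤ κ) :
    StronglyQuasarConvexOn dom h k (k⁻¹ * (κ * γ)) xbar := by
  intro x hx t ht
  have e : k * (k⁻¹ * (κ * γ)) = κ * γ := mul_inv_cancel_left₀ hk.ne' _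
  rw [e]
  have h1 := H x hx t ht
  rcases hkκ.eq_or_lt with rfl | hlt
  · exact h1
  have hκ1 := hκ.2
  have p1 : (0:ℝ) < 2 - k := by linarith
  have p2 : (0:ℝ) < 2 - κ := by linarith
  have hs : t / (2 - k) ∈ Ico (0:ℝ) 1 :=
    ⟨div_nonneg ht.1 p1.le, (div_lt_one p1).2 (by linarith [ht.2])⟩
  have g := mul_le_mul_of_nonneg_left (H.growth hdom hxbar hmin hκ hγ hx hs)
    (mul_nonneg ht.1 (sub_nonneg.2 hkκ))
  have key : t * (κ - k) * (t / (2 - k) * (κ * γ / 2 / (2 - κ) * ‖x - xbar‖ ^ 2)) =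
      t * (1 - t / (2 - k)) * (κ * γ / 2) * ‖x - xbar‖ ^ 2
        - t * (1 - t / (2 - κ)) * (κ * γ / 2) * ‖x - xbar‖ ^ 2 := by
    field_simp
    ring
  rw [key] at g
  linarith

/-- closure under finite positive weighted sums. If `h i` are proper
functions with effective domains `dom i` whose intersection is nonempty and with
common minimizer `xbar`, each `(κ i, γ i)`-strongly quasar-convex w.r.t. `xbar`, and
`α i > 0`, then `x ↦ ∑ i, α i * h i x` is `(κ, γ)`-strongly quasar-convex w.r.t. `xbar`
(in particular `xbar` minimizes it on `⋂ i, dom i`), with `κ = min_i κ i` and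
`γ = κ⁻¹ * ∑ i, α i * κ i * γ i`. -/
theorem stronglyQuasarConvex_sum {n m : ℕ} (hm : 0 < m)
    (dom : Fin m → Set (EuclideanSpace ℝ (Fin n)))
    (h : Fin m → EuclideanSpace ℝ (Fin n) → ℝ)
    (hdom : ∀ i, Convex ℝ (dom i))
    (hne : (⋂ i, dom i).Nonempty)
    (xbar : EuclideanSpace ℝ (Fin n)) (hxbar : ∀ i, xbar ∈ dom i)
    (hmin : ∀ i, ∀ y ∈ dom i, h i xbar ≤ h i y)
    (κ γ α : Fin m → ℝ)
    (hκ : ∀ i, κ i ∈ Ioc (0:ℝ) 1) (hγ : ∀ i, 0 ≤ γ i) (hα : ∀ i, 0 < α i)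
    (hsqc : ∀ i, StronglyQuasarConvexOn (dom i) (h i) (κ i) (γ i) xbar) :
    (∀ y ∈ ⋂ i, dom i, (∑ i, α i * h i xbar) ≤ ∑ i, α i * h i y) ∧
    StronglyQuasarConvexOn (⋂ i, dom i) (fun x => ∑ i, α i * h i x)
      (⨅ i, κ i) ((⨅ i, κ i)⁻¹ * ∑ i, α i * κ i * γ i) xbar := by
  have : Nonempty (Fin m) := ⟨⟨0, hm⟩⟩
  refine ⟨fun y hy => Finset.sum_le_sum fun i _ =>
    mul_le_mul_of_nonneg_left (hmin i y (mem_iInter.1 hy i)) (hα i).le, ?_⟩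
  have hle : ∀ i, (⨅ i, κ i) ≤ κ i := ciInf_le (Set.finite_range κ).bddBelow
  have hpos : 0 < ⨅ i, κ i := by
    obtain ⟨i, hi⟩ := exists_eq_ciInf_of_finite (f := κ)
    rw [← hi]
    exact (hκ i).1
  generalize (⨅ i, κ i) = k at hle hpos ⊢
  intro x hx t ht
  have hi : ∀ i, _ := fun i => mul_le_mul_of_nonneg_left
    ((hsqc i).lower (hdom i) (hxbar i) (hmin i) (hκ i) (hγ i) hpos (hle i) x
      (mem_iInter.1 hx i) t ht) (hα i).le
  refine (Finset.sum_le_sum fun i _ => hi i).trans (le_of_eq ?_)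
  simp only [Finset.mul_sum, Finset.sum_mul, Finset.sum_div, ← Finset.sum_add_distrib,
    ← Finset.sum_sub_distrib]
  exact Finset.sum_congr rfl fun i _ => by ring
end

section
/- Let h : ℝᵐ → ℝ be (κ,γ)-strongly quasar-convex with respect to ȳ ∈ argmin h, where κ ∈ (0,1] and γ ≥ 0, and let A : ℝⁿ → ℝᵐ be an injective linear map (full column rank) with ȳ in the range of A; let x̄ ∈ ℝⁿ satisfy A x̄ = ȳ, and let σ > 0 satisfy ‖A u‖ ≥ σ for every unit vector u ∈ ℝⁿ. Then g := h ∘ A is (κ, γσ²)-strongly quasar-convex on ℝⁿ with respect to x̄; in particular, x̄ ∈ argmin g and for all x ∈ ℝⁿ and λ ∈ [0,1]: g(λx̄ + (1−λ)x) ≤ κλ·g(x̄) + (1−κλ)·g(x) − λ(1 − λ/(2−κ))·(κγσ²/2)·‖x − x̄‖². -/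
/-! Since `A` is linear, it sends the segment from `xbar` to `x` to the segment from `ybar` to
`A x`, so the inequality for `h` at `A x` is already the inequality for `h ∘ A`, with
`‖A (x - xbar)‖ ^ 2` in the quadratic term. By homogeneity (`mul_norm_le_norm_map`) that
square is at least `σ ^ 2 * ‖x - xbar‖ ^ 2`, and its coefficient is nonnegative. -/

/-- A lower bound for a linear map on the unit sphere extends to all vectors by homogeneity. -/
lemma mul_norm_le_norm_map {E F : Type*} [NormedAddCommGroup E] [NormedSpace ℝ E]
    [NormedAddCommGroup F] [NormedSpace ℝ F] (A : E →ₗ[ℝ] F) {σ : ℝ}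
    (hA : ∀ u : E, ‖u‖ = 1 → σ ≤ ‖A u‖) (v : E) : σ * ‖v‖ ≤ ‖A v‖ := by
  rcases eq_or_ne v 0 with rfl | hv
  · simp
  · have hpos : 0 < ‖v‖ := norm_pos_iff.2 hv
    have h := hA (‖v‖⁻¹ • v) (by rw [norm_smul, norm_inv, norm_norm, inv_mul_cancel₀ hpos.ne'])
    rw [map_smul, norm_smul, norm_inv, norm_norm, inv_mul_eq_div] at h
    exact (le_div_iff₀ hpos).1 h

open Set

/-- preservation under injective linear composition.  Let
`h : ℝᵐ → ℝ` be `(κ,γ)`-strongly quasar-convex with respect to a global minimizer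
`ybar`, let `A : ℝⁿ → ℝᵐ` be an injective linear map with `A xbar = ybar`, and let
`σ > 0` satisfy `‖A u‖ ≥ σ` for every unit vector `u`.  Then `g = h ∘ A` is
`(κ, γσ²)`-strongly quasar-convex on `ℝⁿ` with respect to `xbar`; in particular
`xbar ∈ argmin g`. -/
theorem stronglyQuasarConvex_comp_linear {n m : ℕ}
    (h : EuclideanSpace ℝ (Fin m) → ℝ)
    (ybar : EuclideanSpace ℝ (Fin m))
    (hymin : ∀ y, h ybar ≤ h y)
    (κ γ : ℝ) (hκ : κ ∈ Ioc (0:ℝ) 1) (hγ : 0 ≤ γ)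
    (hsqc : ∀ y : EuclideanSpace ℝ (Fin m), ∀ t ∈ Icc (0:ℝ) 1,
      h (t • ybar + (1 - t) • y) ≤
        κ * t * h ybar + (1 - κ * t) * h y
          - t * (1 - t / (2 - κ)) * (κ * γ / 2) * ‖y - ybar‖ ^ 2)
    (A : EuclideanSpace ℝ (Fin n) →ₗ[ℝ] EuclideanSpace ℝ (Fin m))
    (hA : Function.Injective A)
    (xbar : EuclideanSpace ℝ (Fin n)) (hxbar : A xbar = ybar)
    (σ : ℝ) (hσ : 0 < σ)
    (hAσ : ∀ u : EuclideanSpace ℝ (Fin n), ‖u‖ = 1 → σ ≤ ‖A u‖) :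
    (∀ x, h (A xbar) ≤ h (A x)) ∧
    (∀ x : EuclideanSpace ℝ (Fin n), ∀ t ∈ Icc (0:ℝ) 1,
      h (A (t • xbar + (1 - t) • x)) ≤
        κ * t * h (A xbar) + (1 - κ * t) * h (A x)
          - t * (1 - t / (2 - κ)) * (κ * (γ * σ ^ 2) / 2) * ‖x - xbar‖ ^ 2) := by
  subst hxbar
  refine ⟨fun x => hymin _, fun x t ht => ?_⟩
  have hx := hsqc (A x) t ht
  rw [← map_smul, ← map_smul, ← map_add, ← map_sub] at hx
  have hsq : σ ^ 2 * ‖x - xbar‖ ^ 2 ≤ ‖A (x - xbar)‖ ^ 2 := by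
    rw [← mul_pow]
    exact pow_le_pow_left₀ (by positivity) (mul_norm_le_norm_map A hAσ _) 2
  -- The modulus is nonnegative because `t ≤ 1 ≤ 2 - κ`.
  have hfrac : t / (2 - κ) ≤ 1 := by
    rw [div_le_one (by linarith [hκ.2])]
    linarith [hκ.2, ht.2]
  have hcoef : 0 ≤ t * (1 - t / (2 - κ)) * (κ * γ / 2) :=
    mul_nonneg (mul_nonneg ht.1 (sub_nonneg.2 hfrac))
      (div_nonneg (mul_nonneg hκ.1.le hγ) zero_le_two)
  linarith [mul_le_mul_of_nonneg_left hsq hcoef]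
end

section
/- Let h : ℝⁿ → ℝ ∪ {+∞} be proper, x̄ ∈ argmin h, κ₁ ∈ (0,1), γ ≥ 0, and suppose h is (κ₁,γ)-strongly quasar-convex with respect to x̄. Let I ⊆ ℝ be an interval containing all finite values of h, and let φ : I → ℝ satisfy: h(x̄) ∈ argmin_I φ, φ is κ₂-quasar-convex with respect to h(x̄) for some κ₂ ∈ (0,1], and there exists m ≥ 0 with φ(t) − φ(s) ≥ m(t − s) for all t ≥ s in I. Then g := φ ∘ h is (κ, γ_g)-strongly quasar-convex with respect to x̄, where κ := κ₁κ₂ and γ_g := C·m·γ/κ₂ with C := (1−κ₁)(2−κ₁κ₂)/((2−κ₁)(1−κ₁κ₂)). -/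
/-!
For `x ∈ dom` and `y = t • xbar + (1 - t) • x`, let `u = κ₁ t h(xbar) + (1 - κ₁ t) h(x)`, which lies
in `I`. Strong quasar-convexity of `h` says `h y ≤ u - Q` with
`Q = t (1 - t / (2 - κ₁)) (κ₁ γ / 2) ‖x - xbar‖² ≥ 0`, so the growth condition on `φ` gives
`φ (h y) ≤ φ u - m Q`, while quasar-convexity of `φ` with parameter `κ₁ t` bounds `φ u`.
It remains to compare `m Q` with the modulus claimed for `φ ∘ h`, which is
`modulus_le`: the constant `C` is the ratio of the two quadratic factors at `t = 1`, where that
ratio is smallest.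
-/

open Set

/-- Comparison of the factors `1 - t / (2 - κ)` for the parameters `a` and `b ≤ a`. After clearing
denominators it reads `(1 - a) (1 - t) ≤ (1 - b) (1 - t)`. -/
lemma modulus_le {a b t : ℝ} (ha : a < 1) (hba : b ≤ a) (ht : t ≤ 1) :
    (1 - a) * (2 - b) / ((2 - a) * (1 - b)) * (1 - t / (2 - b)) ≤ 1 - t / (2 - a) := by
  have h1 : 0 < 2 - a := by linarith
  have h2 : 0 < 1 - b := by linarith
  have h3 : 0 < 2 - b := by linarith
  have e1 : (1 - a) * (2 - b) / ((2 - a) * (1 - b)) * (1 - t / (2 - b))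
      = (1 - a) * (2 - b - t) / ((2 - a) * (1 - b)) := by
    field_simp
  have e2 : 1 - t / (2 - a) = (2 - a - t) * (1 - b) / ((2 - a) * (1 - b)) := by
    field_simp
  rw [e1, e2]
  apply div_le_div_of_nonneg_right _ (by positivity)
  nlinarith [mul_nonneg (sub_nonneg.2 hba) (sub_nonneg.2 ht)]

/-- composition with a quasar-convex outer function.  Let `h` be proper
and `(κ₁,γ)`-strongly quasar-convex w.r.t. a minimizer `xbar` with `κ₁ ∈ (0,1)`, `γ ≥ 0`.
Let `I` be an interval containing all (finite) values of `h`, and let `φ : I → ℝ` be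
`κ₂`-quasar-convex with respect to `h xbar ∈ argmin_I φ` and satisfy
`φ t - φ s ≥ m (t - s)` for `t ≥ s` in `I` with `m ≥ 0`.  Then `g = φ ∘ h` is
`(κ₁κ₂, C m γ / κ₂)`-strongly quasar-convex with respect to `xbar`, where
`C = (1-κ₁)(2-κ₁κ₂)/((2-κ₁)(1-κ₁κ₂))`; in particular `xbar` minimizes `g` on `dom`. -/
theorem stronglyQuasarConvex_comp {n : ℕ}
    (dom : Set (EuclideanSpace ℝ (Fin n))) (h : EuclideanSpace ℝ (Fin n) → ℝ)
    (hdom : Convex ℝ dom) (hne : dom.Nonempty)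
    (xbar : EuclideanSpace ℝ (Fin n)) (hxbar : xbar ∈ dom)
    (hmin : ∀ y ∈ dom, h xbar ≤ h y)
    (κ₁ γ : ℝ) (hκ₁ : κ₁ ∈ Ioo (0:ℝ) 1) (hγ : 0 ≤ γ)
    (hsqc : StronglyQuasarConvexOn dom h κ₁ γ xbar)
    (I : Set ℝ) (hI : I.OrdConnected) (hhI : ∀ x ∈ dom, h x ∈ I)
    (φ : ℝ → ℝ)
    (hφmin : ∀ t ∈ I, φ (h xbar) ≤ φ t)
    (κ₂ : ℝ) (hκ₂ : κ₂ ∈ Ioc (0:ℝ) 1)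
    (hφqc : ∀ t ∈ I, ∀ lam ∈ Icc (0:ℝ) 1,
      φ (lam * h xbar + (1 - lam) * t) ≤ κ₂ * lam * φ (h xbar) + (1 - κ₂ * lam) * φ t)
    (m : ℝ) (hm : 0 ≤ m)
    (hφincr : ∀ s ∈ I, ∀ t ∈ I, s ≤ t → m * (t - s) ≤ φ t - φ s) :
    (∀ y ∈ dom, φ (h xbar) ≤ φ (h y)) ∧
    StronglyQuasarConvexOn dom (fun x => φ (h x)) (κ₁ * κ₂)
      ((1 - κ₁) * (2 - κ₁ * κ₂) / ((2 - κ₁) * (1 - κ₁ * κ₂)) * m * γ / κ₂) xbar := by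
  obtain ⟨hk0, hk1⟩ := hκ₁
  obtain ⟨hl0, hl1⟩ := hκ₂
  refine ⟨fun y hy => hφmin _ (hhI y hy), ?_⟩
  intro x hx t ht
  obtain ⟨ht0, ht1⟩ := ht
  have hy : t • xbar + (1 - t) • x ∈ dom :=
    hdom hxbar hx ht0 (by linarith) (by ring)
  have hs := hsqc x hx t ⟨ht0, ht1⟩
  have hkt : κ₁ * t ∈ Icc (0:ℝ) 1 := ⟨by positivity, by nlinarith⟩
  have huI : κ₁ * t * h xbar + (1 - κ₁ * t) * h x ∈ I :=
    hI.convex (hhI _ hxbar) (hhI _ hx) hkt.1 (by linarith [hkt.2]) (by ring)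
  have hqc := hφqc (h x) (hhI x hx) (κ₁ * t) hkt
  have hD : 0 ≤ ‖x - xbar‖ ^ 2 := by positivity
  have hfac : 0 ≤ 1 - t / (2 - κ₁) := by
    rw [sub_nonneg, div_le_one (by linarith)]
    linarith
  have hQ : 0 ≤ t * (1 - t / (2 - κ₁)) * (κ₁ * γ / 2) * ‖x - xbar‖ ^ 2 := by positivity
  have hinc := hφincr _ (hhI _ hy) _ huI (by linarith)
  have hmQ : m * (t * (1 - t / (2 - κ₁)) * (κ₁ * γ / 2) * ‖x - xbar‖ ^ 2) ≤
      m * (κ₁ * t * h xbar + (1 - κ₁ * t) * h x - h (t • xbar + (1 - t) • x)) :=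
    mul_le_mul_of_nonneg_left (by linarith) hm
  have hmod := modulus_le (b := κ₁ * κ₂) hk1 (by nlinarith) ht1
  have hcmp := mul_le_mul_of_nonneg_left hmod
    (show 0 ≤ m * t * (κ₁ * γ / 2) * ‖x - xbar‖ ^ 2 by positivity)
  set C := (1 - κ₁) * (2 - κ₁ * κ₂) / ((2 - κ₁) * (1 - κ₁ * κ₂))
  -- The division by `κ₂` in the modulus cancels the factor `κ₂` of `κ₁ * κ₂`.
  have hcancel : κ₁ * κ₂ * (C * m * γ / κ₂) / 2 = κ₁ * (C * m * γ) / 2 := by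
    field_simp
  show φ (h (t • xbar + (1 - t) • x)) ≤ κ₁ * κ₂ * t * φ (h xbar)
    + (1 - κ₁ * κ₂ * t) * φ (h x)
    - t * (1 - t / (2 - κ₁ * κ₂)) * (κ₁ * κ₂ * (C * m * γ / κ₂) / 2) * ‖x - xbar‖ ^ 2
  rw [hcancel]
  linarith
end

section
/- Let h : ℝⁿ → ℝ ∪ {+∞} be proper, x̄ ∈ argmin h, and suppose h is κ₁-quasar-convex with respect to x̄ for some κ₁ ∈ (0,1]. Let I ⊆ ℝ be an interval containing all finite values of h, and let φ : I → ℝ be nondecreasing with h(x̄) ∈ argmin_I φ and κ₂-quasar-convex with respect to h(x̄) for some κ₂ ∈ (0,1]. Then φ ∘ h is (κ₁κ₂)-quasar-convex with respect to x̄. -/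
/-!
Apply the monotone `φ` to the quasar-convexity inequality of `h` at parameter `t`, and then use
the quasar-convexity of `φ` at the point `h x` with parameter `κ₁ * t ∈ [0, 1]`; the two
constants multiply.
-/

open Set

/-- `κ`-quasar-convexity of the function represented by `(h, dom)` with respect to `xbar`. -/
def QuasarConvexOn {n : ℕ} (dom : Set (EuclideanSpace ℝ (Fin n)))
    (h : EuclideanSpace ℝ (Fin n) → ℝ) (κ : ℝ) (xbar : EuclideanSpace ℝ (Fin n)) : Prop :=
  ∀ x ∈ dom, ∀ t ∈ Icc (0:ℝ) 1,
    h (t • xbar + (1 - t) • x) ≤ κ * t * h xbar + (1 - κ * t) * h x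

/-- quasar-convex composition.  Let `h` be proper and `κ₁`-quasar-convex
with respect to a minimizer `xbar`, let `I` be an interval containing all (finite) values
of `h`, and let `φ : I → ℝ` be nondecreasing on `I`, minimized on `I` at `h xbar`, and
`κ₂`-quasar-convex with respect to `h xbar`.  Then `φ ∘ h` is `(κ₁ κ₂)`-quasar-convex with
respect to `xbar`; in particular `xbar` minimizes `φ ∘ h` on `dom`. -/
theorem quasarConvex_comp {n : ℕ}
    (dom : Set (EuclideanSpace ℝ (Fin n))) (h : EuclideanSpace ℝ (Fin n) → ℝ)
    (hdom : Convex ℝ dom) (hne : dom.Nonempty)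
    (xbar : EuclideanSpace ℝ (Fin n)) (hxbar : xbar ∈ dom)
    (hmin : ∀ y ∈ dom, h xbar ≤ h y)
    (κ₁ : ℝ) (hκ₁ : κ₁ ∈ Ioc (0:ℝ) 1)
    (hqc : QuasarConvexOn dom h κ₁ xbar)
    (I : Set ℝ) (hI : I.OrdConnected) (hhI : ∀ x ∈ dom, h x ∈ I)
    (φ : ℝ → ℝ) (hφmono : MonotoneOn φ I)
    (hφmin : ∀ t ∈ I, φ (h xbar) ≤ φ t)
    (κ₂ : ℝ) (hκ₂ : κ₂ ∈ Ioc (0:ℝ) 1)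
    (hφqc : ∀ t ∈ I, ∀ lam ∈ Icc (0:ℝ) 1,
      φ (lam * h xbar + (1 - lam) * t) ≤ κ₂ * lam * φ (h xbar) + (1 - κ₂ * lam) * φ t) :
    (∀ y ∈ dom, φ (h xbar) ≤ φ (h y)) ∧
    QuasarConvexOn dom (fun x => φ (h x)) (κ₁ * κ₂) xbar := by
  refine ⟨fun y hy => hφmin _ (hhI y hy), fun x hx t ht => ?_⟩
  obtain ⟨ht0, ht1⟩ := ht
  have hlam : κ₁ * t ∈ Icc (0:ℝ) 1 :=
    ⟨mul_nonneg hκ₁.1.le ht0, mul_le_one₀ hκ₁.2 ht0 ht1⟩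
  have hseg : t • xbar + (1 - t) • x ∈ dom :=
    hdom hxbar hx ht0 (sub_nonneg.2 ht1) (by ring)
  -- The comparison value is a convex combination of `h xbar` and `h x`, so it stays in `I`,
  -- which is what monotonicity of `φ` on `I` requires.
  have hmem : κ₁ * t * h xbar + (1 - κ₁ * t) * h x ∈ I :=
    hI.convex (hhI xbar hxbar) (hhI x hx) hlam.1 (sub_nonneg.2 hlam.2) (by ring)
  calc φ (h (t • xbar + (1 - t) • x))
      ≤ φ (κ₁ * t * h xbar + (1 - κ₁ * t) * h x) :=
        hφmono (hhI _ hseg) hmem (hqc x hx t ⟨ht0, ht1⟩)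
    _ ≤ κ₂ * (κ₁ * t) * φ (h xbar) + (1 - κ₂ * (κ₁ * t)) * φ (h x) :=
        hφqc (h x) (hhI x hx) (κ₁ * t) hlam
    _ = κ₁ * κ₂ * t * φ (h xbar) + (1 - κ₁ * κ₂ * t) * φ (h x) := by ring
end

section
/- Let h : ℝⁿ → ℝ ∪ {+∞} be a proper function with convex effective domain that is locally Lipschitz on its domain, let x, y ∈ dom h, and for λ ∈ [0,1] define x_λ := (1−λ)x + λy and g(λ) := h(x_λ). Then g is absolutely continuous on [0,1], and for almost every λ ∈ (0,1) there exists ξ_λ ∈ ∂^C h(x_λ) such that g'(λ) = ⟨ξ_λ, y − x⟩. -/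
/-!
Along the segment `[x, y]`, a compact subset of the domain, `h` is Lipschitz, so `g` is Lipschitz
on `[0, 1]`; this gives absolute continuity, and differentiability of `g` almost everywhere.

At a point `lam` where `g` has derivative `a`, the one-sided difference quotients of `h` at
`z = (1 - lam) x + lam y` in the directions `± (y - x)` tend to `± a`, whence
`a ≤ h°(z; y - x)` and `-a ≤ h°(z; -(y - x))` (`le_clarkeDeriv_of_tendsto`). Since `h` is Lipschitz
near `z`, the function `h°(z; ·)` is finite and sublinear (`clarkeDeriv_smul`, `clarkeDeriv_add_le`).
The Hahn-Banach theorem therefore extends the linear form `c (y - x) ↦ c a` to one dominated by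
`h°(z; ·)`, and the vector representing it is the required Clarke subgradient
(`exists_mem_clarkeSubdiff`).
-/

open Set Filter Topology MeasureTheory RealInnerProductSpace

/-- Clarke directional derivative of `h` at `x` in direction `d`:
`h°(x; d) = limsup_{y → x, t ↓ 0} (h (y + t d) - h y) / t`. -/
noncomputable def clarkeDeriv {n : ℕ} (h : EuclideanSpace ℝ (Fin n) → ℝ)
    (x d : EuclideanSpace ℝ (Fin n)) : ℝ :=
  Filter.limsup (fun p : EuclideanSpace ℝ (Fin n) × ℝ => (h (p.1 + p.2 • d) - h p.1) / p.2)
    ((𝓝 x) ×ˢ (𝓝[>] (0:ℝ)))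

/-- Clarke subdifferential of `h` at `x`:
`∂^C h(x) = {v : ⟪v, d⟫ ≤ h°(x; d) for all d}`. -/
def clarkeSubdiff {n : ℕ} (h : EuclideanSpace ℝ (Fin n) → ℝ)
    (x : EuclideanSpace ℝ (Fin n)) : Set (EuclideanSpace ℝ (Fin n)) :=
  {v | ∀ d, ⟪v, d⟫ ≤ clarkeDeriv h x d}

/-- Absolute continuity of `g : ℝ → ℝ` on `[a,b]`: for every `ε > 0` there is `δ > 0` such
that for every finite family of pairwise disjoint subintervals `(s i, t i)` of `[a,b]` of
total length `< δ`, `∑ i, |g (t i) - g (s i)| < ε`. -/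
def AbsolutelyContinuousOn (g : ℝ → ℝ) (a b : ℝ) : Prop :=
  ∀ ε > 0, ∃ δ > 0, ∀ (N : ℕ) (s t : Fin N → ℝ),
    (∀ i, a ≤ s i ∧ s i ≤ t i ∧ t i ≤ b) →
    (∀ i j, i ≠ j → Disjoint (Set.Ioo (s i) (t i)) (Set.Ioo (s j) (t j))) →
    (∑ i, (t i - s i)) < δ → (∑ i, |g (t i) - g (s i)|) < ε

section ClarkeLemmas

variable {n : ℕ} {h : EuclideanSpace ℝ (Fin n) → ℝ} {x : EuclideanSpace ℝ (Fin n)}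

/-- Near a point where `h` is Lipschitz the difference quotients are bounded; this makes the
real-valued `limsup` in `clarkeDeriv` the genuine one. -/
lemma eventually_abs_quotient_le {K : NNReal} {U : Set (EuclideanSpace ℝ (Fin n))}
    (hU : U ∈ 𝓝 x) (hK : LipschitzOnWith K h U) (d : EuclideanSpace ℝ (Fin n)) :
    ∀ᶠ p : EuclideanSpace ℝ (Fin n) × ℝ in (𝓝 x) ×ˢ (𝓝[>] (0:ℝ)),
      |(h (p.1 + p.2 • d) - h p.1) / p.2| ≤ K * ‖d‖ := by
  have h1 : Tendsto (fun p : EuclideanSpace ℝ (Fin n) × ℝ => p.1) ((𝓝 x) ×ˢ (𝓝[>] (0:ℝ))) (𝓝 x) :=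
    tendsto_fst
  have h2 : Tendsto (fun p : EuclideanSpace ℝ (Fin n) × ℝ => p.2)
      ((𝓝 x) ×ˢ (𝓝[>] (0:ℝ))) (𝓝[>] 0) := tendsto_snd
  have h3 : Tendsto (fun p : EuclideanSpace ℝ (Fin n) × ℝ => p.1 + p.2 • d)
      ((𝓝 x) ×ˢ (𝓝[>] (0:ℝ))) (𝓝 x) := by
    simpa using h1.add ((h2.mono_right nhdsWithin_le_nhds).smul_const d)
  filter_upwards [h1 hU, h3 hU, h2 self_mem_nhdsWithin] with p hp1 hp3 hp2
  have hp2 : 0 < p.2 := hp2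
  have hd := hK.dist_le_mul _ hp3 _ hp1
  rw [Real.dist_eq, dist_eq_norm, add_sub_cancel_left, norm_smul, Real.norm_eq_abs,
    abs_of_pos hp2] at hd
  rw [abs_div, abs_of_pos hp2, div_le_iff₀ hp2]
  linarith

lemma isBoundedUnder_quotient (hL : ∃ (K : NNReal) (U : Set (EuclideanSpace ℝ (Fin n))),
    U ∈ 𝓝 x ∧ LipschitzOnWith K h U) (d : EuclideanSpace ℝ (Fin n)) :
    IsBoundedUnder (· ≤ ·) ((𝓝 x) ×ˢ (𝓝[>] (0:ℝ)))
      (fun p : EuclideanSpace ℝ (Fin n) × ℝ => (h (p.1 + p.2 • d) - h p.1) / p.2) := by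
  obtain ⟨K, U, hU, hK⟩ := hL
  exact isBoundedUnder_of_eventually_le
    ((eventually_abs_quotient_le hU hK d).mono fun p hp => (abs_le.1 hp).2)

lemma isCoboundedUnder_quotient (hL : ∃ (K : NNReal) (U : Set (EuclideanSpace ℝ (Fin n))),
    U ∈ 𝓝 x ∧ LipschitzOnWith K h U) (d : EuclideanSpace ℝ (Fin n)) :
    IsCoboundedUnder (· ≤ ·) ((𝓝 x) ×ˢ (𝓝[>] (0:ℝ)))
      (fun p : EuclideanSpace ℝ (Fin n) × ℝ => (h (p.1 + p.2 • d) - h p.1) / p.2) := by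
  obtain ⟨K, U, hU, hK⟩ := hL
  exact (isBoundedUnder_of_eventually_ge
    ((eventually_abs_quotient_le hU hK d).mono fun p hp => (abs_le.1 hp).1)).isCoboundedUnder_le

lemma eventually_lt_of_clarkeDeriv_lt (hL : ∃ (K : NNReal) (U : Set (EuclideanSpace ℝ (Fin n))),
    U ∈ 𝓝 x ∧ LipschitzOnWith K h U) {d : EuclideanSpace ℝ (Fin n)} {r : ℝ}
    (hr : clarkeDeriv h x d < r) :
    ∀ᶠ p : EuclideanSpace ℝ (Fin n) × ℝ in (𝓝 x) ×ˢ (𝓝[>] (0:ℝ)),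
      (h (p.1 + p.2 • d) - h p.1) / p.2 < r :=
  eventually_lt_of_limsup_lt hr (isBoundedUnder_quotient hL d)

lemma clarkeDeriv_le_of_eventually (hL : ∃ (K : NNReal) (U : Set (EuclideanSpace ℝ (Fin n))),
    U ∈ 𝓝 x ∧ LipschitzOnWith K h U) {d : EuclideanSpace ℝ (Fin n)} {r : ℝ}
    (hr : ∀ᶠ p : EuclideanSpace ℝ (Fin n) × ℝ in (𝓝 x) ×ˢ (𝓝[>] (0:ℝ)),
      (h (p.1 + p.2 • d) - h p.1) / p.2 ≤ r) : clarkeDeriv h x d ≤ r :=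
  limsup_le_of_le (isCoboundedUnder_quotient hL d) hr

/-- Subadditivity: split the increment along `t (d + e)` at the intermediate base point `y + t d`,
which still tends to `x`. -/
lemma clarkeDeriv_add_le (hL : ∃ (K : NNReal) (U : Set (EuclideanSpace ℝ (Fin n))),
    U ∈ 𝓝 x ∧ LipschitzOnWith K h U) (d e : EuclideanSpace ℝ (Fin n)) :
    clarkeDeriv h x (d + e) ≤ clarkeDeriv h x d + clarkeDeriv h x e := by
  refine le_of_forall_pos_le_add fun ε hε => ?_
  have hd := eventually_lt_of_clarkeDeriv_lt hL
    (show clarkeDeriv h x d < clarkeDeriv h x d + ε / 2 by linarith)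
  have he := eventually_lt_of_clarkeDeriv_lt hL
    (show clarkeDeriv h x e < clarkeDeriv h x e + ε / 2 by linarith)
  have h1 : Tendsto (fun p : EuclideanSpace ℝ (Fin n) × ℝ => p.1) ((𝓝 x) ×ˢ (𝓝[>] (0:ℝ))) (𝓝 x) :=
    tendsto_fst
  have h2 : Tendsto (fun p : EuclideanSpace ℝ (Fin n) × ℝ => p.2)
      ((𝓝 x) ×ˢ (𝓝[>] (0:ℝ))) (𝓝[>] 0) := tendsto_snd
  have h3 : Tendsto (fun p : EuclideanSpace ℝ (Fin n) × ℝ => p.1 + p.2 • d)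
      ((𝓝 x) ×ˢ (𝓝[>] (0:ℝ))) (𝓝 x) := by
    simpa using h1.add ((h2.mono_right nhdsWithin_le_nhds).smul_const d)
  refine clarkeDeriv_le_of_eventually hL ?_
  filter_upwards [hd, (h3.prodMk h2).eventually he] with p hp hq
  have hsplit : (h (p.1 + p.2 • (d + e)) - h p.1) / p.2
      = (h (p.1 + p.2 • d) - h p.1) / p.2
        + (h (p.1 + p.2 • d + p.2 • e) - h (p.1 + p.2 • d)) / p.2 := by
    rw [smul_add, ← add_assoc]
    ring
  rw [hsplit]
  linarith

lemma clarkeDeriv_smul_le (hL : ∃ (K : NNReal) (U : Set (EuclideanSpace ℝ (Fin n))),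
    U ∈ 𝓝 x ∧ LipschitzOnWith K h U) {c : ℝ} (hc : 0 < c) (d : EuclideanSpace ℝ (Fin n)) :
    clarkeDeriv h x (c • d) ≤ c * clarkeDeriv h x d := by
  refine le_of_forall_pos_le_add fun ε hε => ?_
  have hd := eventually_lt_of_clarkeDeriv_lt hL
    (show clarkeDeriv h x d < clarkeDeriv h x d + ε / c by linarith [div_pos hε hc])
  have h1 : Tendsto (fun p : EuclideanSpace ℝ (Fin n) × ℝ => p.1) ((𝓝 x) ×ˢ (𝓝[>] (0:ℝ))) (𝓝 x) :=
    tendsto_fst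
  have h2 : Tendsto (fun p : EuclideanSpace ℝ (Fin n) × ℝ => p.2)
      ((𝓝 x) ×ˢ (𝓝[>] (0:ℝ))) (𝓝[>] 0) := tendsto_snd
  have h3 : Tendsto (fun p : EuclideanSpace ℝ (Fin n) × ℝ => p.2 * c)
      ((𝓝 x) ×ˢ (𝓝[>] (0:ℝ))) (𝓝[>] 0) := by
    refine tendsto_nhdsWithin_iff.2 ⟨?_, ?_⟩
    · simpa using (h2.mono_right nhdsWithin_le_nhds).mul_const c
    · filter_upwards [h2 self_mem_nhdsWithin] with p hp
      exact mul_pos hp hc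
  refine clarkeDeriv_le_of_eventually hL ?_
  filter_upwards [(h1.prodMk h3).eventually hd, h2 self_mem_nhdsWithin] with p hp hpos
  have hpos : 0 < p.2 := hpos
  have hscale : (h (p.1 + p.2 • c • d) - h p.1) / p.2
      = c * ((h (p.1 + (p.2 * c) • d) - h p.1) / (p.2 * c)) := by
    rw [smul_smul]
    field_simp
  rw [hscale]
  calc _ ≤ c * (clarkeDeriv h x d + ε / c) := mul_le_mul_of_nonneg_left hp.le hc.le
    _ = c * clarkeDeriv h x d + ε := by field_simp

lemma clarkeDeriv_smul (hL : ∃ (K : NNReal) (U : Set (EuclideanSpace ℝ (Fin n))),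
    U ∈ 𝓝 x ∧ LipschitzOnWith K h U) {c : ℝ} (hc : 0 < c) (d : EuclideanSpace ℝ (Fin n)) :
    clarkeDeriv h x (c • d) = c * clarkeDeriv h x d := by
  refine le_antisymm (clarkeDeriv_smul_le hL hc d) ?_
  have := clarkeDeriv_smul_le hL (inv_pos.2 hc) (c • d)
  rw [inv_smul_smul₀ hc.ne', ← div_eq_inv_mul, le_div_iff₀ hc] at this
  linarith

/-- The Clarke derivative dominates any one-sided directional derivative: the base point may be kept
fixed at `x`. -/
lemma le_clarkeDeriv_of_tendsto (hL : ∃ (K : NNReal) (U : Set (EuclideanSpace ℝ (Fin n))),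
    U ∈ 𝓝 x ∧ LipschitzOnWith K h U) {d : EuclideanSpace ℝ (Fin n)} {a : ℝ}
    (ha : Tendsto (fun t : ℝ => (h (x + t • d) - h x) / t) (𝓝[>] 0) (𝓝 a)) :
    a ≤ clarkeDeriv h x d := by
  refine le_of_forall_gt_imp_ge_of_dense fun r hr => ?_
  have hx : Tendsto (fun t : ℝ => (x, t)) (𝓝[>] 0) ((𝓝 x) ×ˢ (𝓝[>] (0:ℝ))) :=
    tendsto_const_nhds.prodMk tendsto_id
  exact le_of_tendsto ha
    ((hx.eventually (eventually_lt_of_clarkeDeriv_lt hL hr)).mono fun t ht => ht.le)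

/-- Hahn-Banach step: a slope `a` compatible with `h°(x; ·)` along the line spanned by `d` is
attained by a Clarke subgradient. The case `d = 0`, which forces `a = 0`, is included. -/
lemma exists_mem_clarkeSubdiff (hL : ∃ (K : NNReal) (U : Set (EuclideanSpace ℝ (Fin n))),
    U ∈ 𝓝 x ∧ LipschitzOnWith K h U) {d : EuclideanSpace ℝ (Fin n)} {a : ℝ}
    (ha : a ≤ clarkeDeriv h x d) (ha' : -a ≤ clarkeDeriv h x (-d)) :
    ∃ ξ ∈ clarkeSubdiff h x, ⟪ξ, d⟫ = a := by
  have h0 : clarkeDeriv h x 0 = 0 := by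
    have := clarkeDeriv_smul hL (c := 2) (by norm_num) 0
    rw [smul_zero] at this
    linarith
  have H : ∀ c : ℝ, c • d = 0 → (RingHom.id ℝ) c • a = 0 := by
    intro c hc
    rcases smul_eq_zero.1 hc with rfl | rfl
    · simp
    · rw [neg_zero] at ha'
      have : a = 0 := by linarith
      simp [this]
  obtain ⟨f, hf, hfle⟩ := exists_extension_of_le_sublinear
    (LinearPMap.mkSpanSingleton' d a H) (clarkeDeriv h x)
    (fun c hc e => clarkeDeriv_smul hL hc e) (clarkeDeriv_add_le hL) (by
      rintro ⟨v, hv⟩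
      obtain ⟨c, rfl⟩ := Submodule.mem_span_singleton.1 hv
      rw [LinearPMap.mkSpanSingleton'_apply]
      simp only [RingHom.id_apply, smul_eq_mul]
      rcases lt_trichotomy c 0 with hc | rfl | hc
      · have := clarkeDeriv_smul hL (neg_pos.2 hc) (-d)
        rw [smul_neg, neg_smul, neg_neg] at this
        rw [this]
        nlinarith
      · simp [h0]
      · rw [clarkeDeriv_smul hL hc]
        exact mul_le_mul_of_nonneg_left ha hc.le)
  refine ⟨(InnerProductSpace.toDual ℝ _).symm (LinearMap.toContinuousLinearMap f), ?_, ?_⟩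
  · intro e
    rw [InnerProductSpace.toDual_symm_apply]
    exact hfle e
  · rw [InnerProductSpace.toDual_symm_apply]
    exact (hf ⟨d, Submodule.mem_span_singleton_self d⟩).trans
      (LinearPMap.mkSpanSingleton'_apply_self d a H _)

end ClarkeLemmas

lemma LipschitzOnWith.absolutelyContinuousOn {g : ℝ → ℝ} {K : NNReal} {a b : ℝ}
    (hg : LipschitzOnWith K g (Icc a b)) : AbsolutelyContinuousOn g a b := by
  intro ε hε
  have hK : (0:ℝ) < K + 1 := by positivity
  refine ⟨ε / (K + 1), div_pos hε hK, fun N s t hst _ hsum => ?_⟩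
  calc ∑ i, |g (t i) - g (s i)| ≤ ∑ i, (K + 1) * (t i - s i) := by
        refine Finset.sum_le_sum fun i _ => ?_
        obtain ⟨h1, h2, h3⟩ := hst i
        have := hg.dist_le_mul (t i) ⟨h1.trans h2, h3⟩ (s i) ⟨h1, h2.trans h3⟩
        rw [Real.dist_eq, Real.dist_eq, abs_of_nonneg (sub_nonneg.2 h2)] at this
        nlinarith
    _ = (K + 1) * ∑ i, (t i - s i) := by rw [Finset.mul_sum]
    _ < ε := by rwa [lt_div_iff₀' hK] at hsum

/-- chain rule along a segment.  Let `h` be proper with convex effective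
domain `dom`, locally Lipschitz on `dom`, and let `x, y ∈ dom`.  For `λ ∈ [0,1]` set
`g(λ) = h((1-λ) x + λ y)`.  Then `g` is absolutely continuous on `[0,1]` and for almost
every `λ ∈ (0,1)` there exists `ξ ∈ ∂^C h((1-λ) x + λ y)` with `g'(λ) = ⟪ξ, y - x⟫`. -/
theorem clarke_chain_rule_segment {n : ℕ}
    (dom : Set (EuclideanSpace ℝ (Fin n))) (h : EuclideanSpace ℝ (Fin n) → ℝ)
    (hdom : Convex ℝ dom) (hne : dom.Nonempty)
    (hlip : ∀ z ∈ dom, ∃ (K : NNReal) (U : Set (EuclideanSpace ℝ (Fin n))),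
      U ∈ 𝓝 z ∧ LipschitzOnWith K h U)
    (x y : EuclideanSpace ℝ (Fin n)) (hx : x ∈ dom) (hy : y ∈ dom) :
    AbsolutelyContinuousOn (fun lam : ℝ => h ((1 - lam) • x + lam • y)) 0 1 ∧
    (∀ᵐ lam ∂(volume.restrict (Set.Ioo (0:ℝ) 1)),
      ∃ ξ ∈ clarkeSubdiff h ((1 - lam) • x + lam • y),
        HasDerivAt (fun lam : ℝ => h ((1 - lam) • x + lam • y)) ⟪ξ, y - x⟫ lam) := by
  have hmem : ∀ lam ∈ Icc (0:ℝ) 1, (1 - lam) • x + lam • y ∈ dom := fun lam hl =>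
    hdom hx hy (sub_nonneg.2 hl.2) hl.1 (by ring)
  have hφ : LipschitzWith ‖y - x‖₊ (fun lam : ℝ => (1 - lam) • x + lam • y) := by
    refine LipschitzWith.of_dist_le_mul fun s t => ?_
    have : (1 - s) • x + s • y - ((1 - t) • x + t • y) = (s - t) • (y - x) := by module
    rw [dist_eq_norm, this, norm_smul, Real.dist_eq, Real.norm_eq_abs, coe_nnnorm, mul_comm]
  obtain ⟨K, hK⟩ := LocallyLipschitzOn.exists_lipschitzOnWith_of_compact
    (f := h) ((isCompact_Icc (a := (0:ℝ)) (b := 1)).image hφ.continuous) (by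
      rintro _ ⟨lam, hl, rfl⟩
      obtain ⟨K, U, hU, hKU⟩ := hlip _ (hmem lam hl)
      exact ⟨K, U, mem_nhdsWithin_of_mem_nhds hU, hKU⟩)
  have hg : LipschitzOnWith (K * ‖y - x‖₊) (fun lam : ℝ => h ((1 - lam) • x + lam • y))
      (Icc 0 1) := hK.comp hφ.lipschitzOnWith (mapsTo_image _ _)
  refine ⟨hg.absolutelyContinuousOn, ?_⟩
  have hae := (hg.mono Ioo_subset_Icc_self).ae_differentiableWithinAt_real measurableSet_Ioo
  filter_upwards [hae, ae_restrict_mem measurableSet_Ioo] with lam hdiff hl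
  have hderiv := (hdiff.differentiableAt (Ioo_mem_nhds hl.1 hl.2)).hasDerivAt
  generalize deriv (fun lam : ℝ => h ((1 - lam) • x + lam • y)) lam = a at hderiv
  have hL := hlip _ (hmem lam (Ioo_subset_Icc_self hl))
  have hslope := hasDerivAt_iff_tendsto_slope_zero.1 hderiv
  have hright : Tendsto
      (fun t : ℝ => (h ((1 - lam) • x + lam • y + t • (y - x)) - h ((1 - lam) • x + lam • y)) / t)
      (𝓝[>] 0) (𝓝 a) := by
    refine (hslope.mono_left (nhdsWithin_mono 0 fun t (ht : 0 < t) => ht.ne')).congr fun t => ?_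
    rw [smul_eq_mul, ← div_eq_inv_mul]
    congr 3
    module
  have hleft : Tendsto
      (fun t : ℝ => (h ((1 - lam) • x + lam • y + t • -(y - x)) - h ((1 - lam) • x + lam • y)) / t)
      (𝓝[>] 0) (𝓝 (-a)) := by
    have hneg : Tendsto (fun t : ℝ => -t) (𝓝[>] 0) (𝓝[≠] 0) := by
      refine tendsto_nhdsWithin_iff.2 ⟨?_, ?_⟩
      · simpa using (tendsto_id.mono_left nhdsWithin_le_nhds : Tendsto id (𝓝[>] (0:ℝ)) (𝓝 0)).neg
      · filter_upwards [self_mem_nhdsWithin] with t ht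
        exact neg_ne_zero.2 (ne_of_gt ht)
    refine (hslope.comp hneg).neg.congr fun t => ?_
    have hpt : (1 - (lam + -t)) • x + (lam + -t) • y
        = (1 - lam) • x + lam • y + t • -(y - x) := by module
    simp only [Function.comp_apply, smul_eq_mul]
    rw [hpt, inv_neg, neg_mul, neg_neg, ← div_eq_inv_mul]
  obtain ⟨ξ, hξ, hξa⟩ := exists_mem_clarkeSubdiff hL
    (le_clarkeDeriv_of_tendsto hL hright) (le_clarkeDeriv_of_tendsto hL hleft)
  exact ⟨ξ, hξ, hξa ▸ hderiv⟩
end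

section
/- Let h : ℝⁿ → ℝ ∪ {+∞} be proper and let x̄ ∈ argmin h. (a) If h is κ-quasar-convex with respect to x̄ for some κ ∈ (0,1], then every Dini-stationary point of h is a global minimizer: if x ∈ dom h satisfies h^{D−}(x;d) ≥ 0 for all d ∈ ℝⁿ, then x ∈ argmin h. (b) If, in addition, h is (κ,γ)-strongly quasar-convex with respect to x̄ with γ > 0, then the set of Dini-stationary points of h is exactly {x̄}. -/
/-!
Everything follows by testing stationarity of `x` in the single direction `xbar - x`. By
quasar-convexity, `h` drops at least linearly along the segment from `x` to `xbar`, with slope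
`κ (h x - h xbar)`, and in the strong case also (on its first half) with slope
`κ γ / 4 * ‖x - xbar‖ ^ 2`. A Dini-stationary point admits no positive rate of linear decrease
(`decrease_rate_nonpos`), so these slopes are nonpositive, which gives `h x ≤ h xbar`,
respectively `x = xbar`. Conversely a minimizer is stationary because all its difference quotients
are nonnegative.
-/

open Set Filter Topology
open scoped Classical

/-- Lower Dini directional derivative of the extended-real-valued function represented by
`(h, dom)` (with value `+∞` off `dom`) at `x ∈ dom` in direction `d`:
`h^{D-}(x; d) = liminf_{t ↓ 0} (h(x + t d) - h(x)) / t`, computed in `EReal`. -/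
noncomputable def diniLower {n : ℕ} (dom : Set (EuclideanSpace ℝ (Fin n)))
    (h : EuclideanSpace ℝ (Fin n) → ℝ) (x d : EuclideanSpace ℝ (Fin n)) : EReal :=
  Filter.liminf
    (fun t : ℝ =>
      if x + t • d ∈ dom then (((h (x + t • d) - h x) / t : ℝ) : EReal) else (⊤ : EReal))
    (𝓝[>] (0:ℝ))

/-- If `h` decreases at rate at least `c` on an initial part of the segment from `x` to a point
`y` of the convex domain, and the lower Dini derivative at `x` towards `y` is nonnegative, then
`c ≤ 0`. -/
lemma decrease_rate_nonpos {n : ℕ} {dom : Set (EuclideanSpace ℝ (Fin n))}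
    {h : EuclideanSpace ℝ (Fin n) → ℝ} (hdom : Convex ℝ dom)
    {x y : EuclideanSpace ℝ (Fin n)} (hx : x ∈ dom) (hy : y ∈ dom) {c : ℝ}
    (hst : (0 : EReal) ≤ diniLower dom h x (y - x))
    (hdec : ∀ t ∈ Ioo (0:ℝ) (1 / 2), h (t • y + (1 - t) • x) ≤ h x - t * c) : c ≤ 0 := by
  have key : diniLower dom h x (y - x) ≤ ((-c : ℝ) : EReal) := by
    refine Filter.liminf_le_of_frequently_le' (Eventually.frequently ?_)
    filter_upwards [Ioo_mem_nhdsGT (show (0:ℝ) < 1 / 2 by norm_num)] with t ht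
    have e : x + t • (y - x) = t • y + (1 - t) • x := by module
    have hmem : t • y + (1 - t) • x ∈ dom :=
      hdom hy hx ht.1.le (by linarith [ht.2]) (by ring)
    rw [e, if_pos hmem, EReal.coe_le_coe_iff, div_le_iff₀ ht.1]
    linarith [hdec t ht]
  have h0 : ((0 : ℝ) : EReal) ≤ ((-c : ℝ) : EReal) := by
    simpa using hst.trans key
  linarith [EReal.coe_le_coe_iff.1 h0]

lemma zero_le_diniLower_of_isMin {n : ℕ} {dom : Set (EuclideanSpace ℝ (Fin n))}
    {h : EuclideanSpace ℝ (Fin n) → ℝ} {x : EuclideanSpace ℝ (Fin n)}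
    (hmin : ∀ y ∈ dom, h x ≤ h y) (d : EuclideanSpace ℝ (Fin n)) :
    (0 : EReal) ≤ diniLower dom h x d := by
  refine Filter.le_liminf_of_le (by isBoundedDefault) ?_
  filter_upwards [self_mem_nhdsWithin] with t ht
  split_ifs with hm
  · exact EReal.coe_nonneg.2 (div_nonneg (sub_nonneg.2 (hmin _ hm)) (le_of_lt ht))
  · exact le_top

/-- no Dini saddle points.  Let `h` be proper with convex effective
domain `dom` and `xbar ∈ argmin h`.
(a) If `h` is `κ`-quasar-convex w.r.t. `xbar` (`κ ∈ (0,1]`), then every Dini-stationary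
point of `h` is a global minimizer.
(b) If moreover `h` is `(κ,γ)`-strongly quasar-convex w.r.t. `xbar` with `γ > 0`, then
the set of Dini-stationary points of `h` is exactly `{xbar}`. -/
theorem quasarConvex_dini_stationary {n : ℕ}
    (dom : Set (EuclideanSpace ℝ (Fin n))) (h : EuclideanSpace ℝ (Fin n) → ℝ)
    (hdom : Convex ℝ dom) (hne : dom.Nonempty)
    (xbar : EuclideanSpace ℝ (Fin n)) (hxbar : xbar ∈ dom)
    (hmin : ∀ y ∈ dom, h xbar ≤ h y)
    (κ : ℝ) (hκ : κ ∈ Ioc (0:ℝ) 1)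
    (hqc : StronglyQuasarConvexOn dom h κ 0 xbar) :
    (∀ x ∈ dom, (∀ d, (0 : EReal) ≤ diniLower dom h x d) → ∀ y ∈ dom, h x ≤ h y) ∧
    (∀ γ : ℝ, 0 < γ → StronglyQuasarConvexOn dom h κ γ xbar →
      {x | x ∈ dom ∧ ∀ d, (0 : EReal) ≤ diniLower dom h x d} = {xbar}) := by
  refine ⟨fun x hx hst y hy => ?_, fun γ hγ hs => ?_⟩
  · have hc : κ * (h x - h xbar) ≤ 0 := by
      refine decrease_rate_nonpos hdom hx hxbar (hst (xbar - x)) fun t ht => ?_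
      have := hqc x hx t ⟨ht.1.le, by linarith [ht.2]⟩
      simp only [mul_zero, zero_div, zero_mul, sub_zero] at this
      linarith
    have : h x - h xbar ≤ 0 := nonpos_of_mul_nonpos_right hc hκ.1
    linarith [hmin y hy]
  · ext x
    simp only [mem_setOf_eq, mem_singleton_iff]
    constructor
    · rintro ⟨hx, hst⟩
      have hc : κ * γ / 4 * ‖x - xbar‖ ^ 2 ≤ 0 := by
        refine decrease_rate_nonpos hdom hx hxbar (hst (xbar - x)) fun t ht => ?_
        have h1 := hs x hx t ⟨ht.1.le, by linarith [ht.2]⟩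
        -- `2 - κ ≥ 1` and `t ≤ 1 / 2`, so the modulus factor is at least one half.
        have h2 : t / (2 - κ) ≤ 1 / 2 := by
          rw [div_le_iff₀ (by linarith [hκ.2])]
          linarith [ht.2, hκ.2]
        have h3 : 0 ≤ κ * t * (h x - h xbar) :=
          mul_nonneg (mul_pos hκ.1 ht.1).le (sub_nonneg.2 (hmin x hx))
        have h4 : 0 ≤ t * (κ * γ / 2) * ‖x - xbar‖ ^ 2 := by
          have := hκ.1
          have := ht.1
          positivity
        have h5 := mul_nonneg (sub_nonneg.2 h2) h4
        linarith
      have hk : 0 < κ * γ / 4 := by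
        have := hκ.1
        positivity
      have hn : ‖x - xbar‖ ^ 2 ≤ 0 := nonpos_of_mul_nonpos_right hc hk
      have hz : ‖x - xbar‖ = 0 := pow_eq_zero_iff two_ne_zero |>.1 (le_antisymm hn (sq_nonneg _))
      exact sub_eq_zero.1 (norm_eq_zero.1 hz)
    · rintro rfl
      exact ⟨hxbar, zero_le_diniLower_of_isMin hmin⟩
end

section
/- Let h : ℝⁿ → ℝ ∪ {+∞} be a proper, lower semicontinuous function that is (κ,γ)-strongly quasar-convex with respect to some x̄ ∈ argmin h, with κ ∈ (0,1] and γ ≥ 0. Then for every β > 0 and every p > 1, the set of global minimizers of h coincides with the set of fixed points of the high-order proximal operator: argmin h = { x ∈ dom h : x ∈ prox_h^{β,p}(x) }. -/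
/-!
A minimizer of `h` is trivially a proximal fixed point, since the penalty vanishes at `y = x`.
Conversely, let `x` be a fixed point and compare it with `t • xbar + (1 - t) • x`, for small
`t > 0`. Quasar-convexity makes `h` drop by at least `κ t (h x - h xbar)`, whereas the penalty is
only `t ^ p ‖x - xbar‖ ^ p / (p β)`. Dividing by `t` and letting `t → 0⁺`, where `t ^ (p - 1) → 0`
because `p > 1`, gives `h x ≤ h xbar`.
-/

open Set Filter Topology
open scoped Classical

/-- The high-order proximal operator of the extended-real-valued function represented by
`(h, dom)` (value `+∞` off `dom`), with parameters `β > 0` and `p > 1`: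
`prox_h^{β,p}(x) = argmin_{y} { h(y) + (1/(pβ)) ‖x - y‖^p }`; since `h = +∞` off `dom`,
the minimization is effectively over `dom`. -/
def hoProx {n : ℕ} (dom : Set (EuclideanSpace ℝ (Fin n))) (h : EuclideanSpace ℝ (Fin n) → ℝ)
    (β p : ℝ) (x : EuclideanSpace ℝ (Fin n)) : Set (EuclideanSpace ℝ (Fin n)) :=
  {y | y ∈ dom ∧ ∀ z ∈ dom,
    h y + 1 / (p * β) * ‖x - y‖ ^ p ≤ h z + 1 / (p * β) * ‖x - z‖ ^ p}

/-- minimizers are exactly the proximal fixed points.  Let `h` be a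
proper, lower semicontinuous, `(κ,γ)`-strongly quasar-convex function with respect to a
minimizer `xbar` (`κ ∈ (0,1]`, `γ ≥ 0`).  Then for every `β > 0` and `p > 1`,
`argmin h = { x ∈ dom h : x ∈ prox_h^{β,p}(x) }`. -/
theorem argmin_eq_proxFixedPoints {n : ℕ}
    (dom : Set (EuclideanSpace ℝ (Fin n))) (h : EuclideanSpace ℝ (Fin n) → ℝ)
    (hdom : Convex ℝ dom) (hne : dom.Nonempty)
    (hlsc : LowerSemicontinuous
      (fun z => if z ∈ dom then ((h z : ℝ) : EReal) else (⊤ : EReal)))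
    (xbar : EuclideanSpace ℝ (Fin n)) (hxbar : xbar ∈ dom)
    (hmin : ∀ y ∈ dom, h xbar ≤ h y)
    (κ γ : ℝ) (hκ : κ ∈ Ioc (0:ℝ) 1) (hγ : 0 ≤ γ)
    (hsqc : StronglyQuasarConvexOn dom h κ γ xbar)
    (β p : ℝ) (hβ : 0 < β) (hp : 1 < p) :
    {x | x ∈ dom ∧ ∀ y ∈ dom, h x ≤ h y} = {x | x ∈ hoProx dom h β p x} := by
  obtain ⟨hκ0, hκ1⟩ := hκ
  have hc : 0 ≤ 1 / (p * β) := by positivity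
  have hp0 : p ≠ 0 := by linarith
  ext x
  constructor
  · rintro ⟨hx, hxmin⟩
    refine ⟨hx, fun z hz => ?_⟩
    have h1 : 0 ≤ 1 / (p * β) * ‖x - z‖ ^ p := by positivity
    rw [sub_self, norm_zero, Real.zero_rpow hp0]
    linarith [hxmin z hz]
  · rintro ⟨hx, hfix⟩
    refine ⟨hx, fun y hy => le_trans ?_ (hmin y hy)⟩
    have key : ∀ t ∈ Ioo (0:ℝ) 1,
        κ * (h x - h xbar) ≤ 1 / (p * β) * ‖x - xbar‖ ^ p * t ^ (p - 1) := by
      rintro t ⟨ht0, ht1⟩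
      have hz : t • xbar + (1 - t) • x ∈ dom :=
        hdom hxbar hx ht0.le (by linarith) (by ring)
      have hpx := hfix _ hz
      have hq := hsqc x hx t ⟨ht0.le, ht1.le⟩
      have hsub : x - (t • xbar + (1 - t) • x) = t • (x - xbar) := by module
      rw [sub_self, norm_zero, Real.zero_rpow hp0, hsub, norm_smul, Real.norm_of_nonneg ht0.le,
        Real.mul_rpow ht0.le (norm_nonneg _)] at hpx
      -- `t ≤ 1 ≤ 2 - κ`, so the strong-convexity term has a favourable sign.
      have hfrac : t / (2 - κ) ≤ 1 := by
        rw [div_le_one (by linarith)]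
        linarith
      have hnn : 0 ≤ t * (1 - t / (2 - κ)) * (κ * γ / 2) * ‖x - xbar‖ ^ 2 := by
        have := sub_nonneg.2 hfrac
        positivity
      have htp : t ^ p = t * t ^ (p - 1) := by
        rw [Real.rpow_sub_one ht0.ne']
        field_simp
      rw [htp] at hpx
      refine le_of_mul_le_mul_left ?_ ht0
      linarith
    have hlim : Tendsto (fun t : ℝ => 1 / (p * β) * ‖x - xbar‖ ^ p * t ^ (p - 1))
        (𝓝[>] 0) (𝓝 0) := by
      have h0 : Tendsto (fun t : ℝ => t ^ (p - 1)) (𝓝[>] 0) (𝓝 0) := by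
        have h1 := (Real.continuousAt_rpow_const 0 (p - 1) (Or.inr (by linarith))).tendsto
        rw [Real.zero_rpow (by linarith)] at h1
        exact h1.mono_left nhdsWithin_le_nhds
      simpa using h0.const_mul (1 / (p * β) * ‖x - xbar‖ ^ p)
    have hle : κ * (h x - h xbar) ≤ 0 :=
      ge_of_tendsto hlim (by
        filter_upwards [Ioo_mem_nhdsGT (zero_lt_one' ℝ)] with t ht using key t ht)
    have := nonpos_of_mul_nonpos_right hle hκ0
    linarith
end

section
/- Let h : ℝⁿ → ℝ ∪ {+∞} be a proper, lower semicontinuous function that is (κ,γ)-strongly quasar-convex with respect to some x̄ ∈ argmin h (κ ∈ (0,1], γ ≥ 0), let p > 1, and let 0 < β' ≤ β_k ≤ β'' for all k. Let {x^k} satisfy x^{k+1} ∈ prox_h^{β_k,p}(x^k) for all k ≥ 0. Then for every ε > 0, there exists an index k with 0 ≤ k ≤ ⌈ p·β''·(h(x⁰) − min_{x∈ℝⁿ} h(x)) / ε^p ⌉ − 1 such that ‖x^{k+1} − x^k‖ ≤ ε. -/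
/-!
Testing the minimality of `x (k + 1)` in the proximal subproblem against `x k` gives
`h (x (k + 1)) + ‖x (k + 1) - x k‖ ^ p / (p * β k) ≤ h (x k)`. If all of the first `N` steps were
longer than `ε`, each would lower `h` by more than `ε ^ p / (p * β'')`; telescoping and
`h xbar ≤ h (x N)` then force `N < p * β'' * (h (x 0) - h xbar) / ε ^ p`, which is impossible for
`N = max ⌈p * β'' * (h (x 0) - h xbar) / ε ^ p⌉₊ 1`.
-/

open Set Filter Topology
open scoped Classical

/-- iteration complexity of HiPPA.  Let `h` be proper, lsc and
`(κ,γ)`-strongly quasar-convex w.r.t. a minimizer `xbar` (so `h xbar = min h`), let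
`p > 1`, `0 < β' ≤ β k ≤ β''`, and let `x (k+1) ∈ prox_h^{β k, p}(x k)` for all `k`.
Then for every `ε > 0` there is an index
`k ≤ ⌈ p β'' (h(x⁰) - min h) / ε^p ⌉ - 1` with `‖x (k+1) - x k‖ ≤ ε`. -/
theorem hippa_iteration_complexity {n : ℕ}
    (dom : Set (EuclideanSpace ℝ (Fin n))) (h : EuclideanSpace ℝ (Fin n) → ℝ)
    (hdom : Convex ℝ dom) (hne : dom.Nonempty)
    (hlsc : LowerSemicontinuous
      (fun z => if z ∈ dom then ((h z : ℝ) : EReal) else (⊤ : EReal)))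
    (xbar : EuclideanSpace ℝ (Fin n)) (hxbar : xbar ∈ dom)
    (hmin : ∀ y ∈ dom, h xbar ≤ h y)
    (κ γ : ℝ) (hκ : κ ∈ Ioc (0:ℝ) 1) (hγ : 0 ≤ γ)
    (hsqc : StronglyQuasarConvexOn dom h κ γ xbar)
    (p : ℝ) (hp : 1 < p)
    (β' β'' : ℝ) (hβ' : 0 < β')
    (β : ℕ → ℝ) (hβ : ∀ k, β' ≤ β k ∧ β k ≤ β'')
    (x : ℕ → EuclideanSpace ℝ (Fin n)) (hx0 : x 0 ∈ dom)
    (hstep : ∀ k, x (k + 1) ∈ hoProx dom h (β k) p (x k))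
    (ε : ℝ) (hε : 0 < ε) :
    ∃ k : ℕ, k ≤ ⌈p * β'' * (h (x 0) - h xbar) / ε ^ p⌉₊ - 1 ∧
      ‖x (k + 1) - x k‖ ≤ ε := by
  have hp0 : 0 < p := by linarith
  have hβ''0 : 0 < β'' := lt_of_lt_of_le hβ' ((hβ 0).1.trans (hβ 0).2)
  have hεp : 0 < ε ^ p := Real.rpow_pos_of_pos hε p
  have hmem : ∀ k, x k ∈ dom := by
    intro k
    cases k with
    | zero => exact hx0
    | succ k => exact (hstep k).1
  by_contra! hcon
  set d := ε ^ p / (p * β'') with hd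
  set c := ⌈p * β'' * (h (x 0) - h xbar) / ε ^ p⌉₊ with hc
  -- Comparing `x (k + 1)` with `x k` in the proximal subproblem gives the sufficient decrease.
  have hdec : ∀ k ≤ c - 1, h (x (k + 1)) + d < h (x k) := by
    intro k hk
    have hβk : 0 < β k := lt_of_lt_of_le hβ' (hβ k).1
    have h1 := (hstep k).2 (x k) (hmem k)
    rw [sub_self, norm_zero, Real.zero_rpow hp0.ne', mul_zero, add_zero] at h1
    have h2 : ε ^ p < ‖x k - x (k + 1)‖ ^ p := by
      rw [norm_sub_rev]
      exact Real.rpow_lt_rpow hε.le (hcon k hk) hp0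
    have h3 : d ≤ 1 / (p * β k) * ε ^ p := by
      rw [hd, one_div_mul_eq_div]
      have := (hβ k).2
      gcongr
    have h4 : 1 / (p * β k) * ε ^ p < 1 / (p * β k) * ‖x k - x (k + 1)‖ ^ p := by
      gcongr
    linarith
  have hsum : ∀ m ≤ c - 1, h (x (m + 1)) + (m + 1) * d < h (x 0) := by
    intro m
    induction m with
    | zero =>
      intro hm
      simpa using hdec 0 hm
    | succ m ih =>
      intro hm
      have h1 := ih (by omega)
      have h2 := hdec (m + 1) hm
      push_cast
      linarith
  have h1 := hsum (c - 1) le_rfl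
  have h2 := hmin _ (hmem (c - 1 + 1))
  -- Truncated subtraction only helps: `c ≤ (c - 1) + 1` also when `c = 0`.
  have h3 : (c : ℝ) ≤ ((c - 1 : ℕ) : ℝ) + 1 := by
    exact_mod_cast (by omega : c ≤ c - 1 + 1)
  have h4 : p * β'' * (h (x 0) - h xbar) / ε ^ p ≤ c := Nat.le_ceil _
  have h5 : (((c - 1 : ℕ) : ℝ) + 1) * d < h (x 0) - h xbar := by linarith
  have h6 : ((c - 1 : ℕ) : ℝ) + 1 < p * β'' * (h (x 0) - h xbar) / ε ^ p := by
    rw [hd, ← mul_div_assoc, div_lt_iff₀ (by positivity)] at h5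
    rw [lt_div_iff₀ hεp]
    linarith
  linarith
end

section
/- Let h : ℝⁿ → ℝ ∪ {+∞} be a proper, lower semicontinuous function that is (κ,γ)-strongly quasar-convex with respect to some x̄ ∈ argmin h (κ ∈ (0,1], γ ≥ 0), let p > 1, let 0 < β' ≤ β_k ≤ β'' for all k, and let {x^k} satisfy x^{k+1} ∈ prox_h^{β_k,p}(x^k) for all k ≥ 0. Then: (a) the sequence {h(x^k)} is nonincreasing; (b) Σ_{k=0}^{∞} ‖x^{k+1} − x^k‖^p < ∞; (c) the sequence {‖x^k − x̄‖} is nonincreasing (Fejér monotonicity with respect to x̄), so {x^k} is bounded; and (d) h(x^k) → h(x̄) = min_{x∈ℝⁿ} h(x). -/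
/-! Write `y = x (k+1)` and `d k = ‖x k - x (k+1)‖`. Parts (a) and (b) follow by testing the minimality
of `y` against `x k` and telescoping. For (c), quasar-convexity shows that `h` does not increase
along the segment from `y` to `xbar`, so no point of that segment is closer to `x k` than `y`; hence
the angle at `y` is not acute (`norm_sub_le_of_segment`), which gives Fejér monotonicity.

For (d), testing minimality against `t • xbar + (1 - t) • y` gives
`κ t (h y - h xbar) ≤ (d k + t D)^p / (p β')` with `D = ‖x 0 - xbar‖`. Since `d k → 0` by (b), the
limit `L` of `h (x k)` satisfies `κ t (L - h xbar) ≤ (t D)^p / (p β')` for every `t ∈ (0, 1]`.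
Dividing by `t` and letting `t → 0` yields `L ≤ h xbar`, because `p > 1`. -/

open Set Filter Topology
open scoped Classical

/-- If `y` is the point of the segment from `y` to `w` closest to `a`, then `y` is at least as
close to `w` as `a` is. -/
lemma norm_sub_le_of_segment {E : Type*} [NormedAddCommGroup E] [InnerProductSpace ℝ E]
    (a y w : E) (H : ∀ t ∈ Ioc (0:ℝ) 1, ‖a - y‖ ≤ ‖a - (t • w + (1 - t) • y)‖) :
    ‖y - w‖ ≤ ‖a - w‖ := by
  have key : ∀ t ∈ Ioc (0:ℝ) 1, 2 * inner ℝ (a - y) (w - y) ≤ t * ‖w - y‖ ^ 2 := by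
    intro t ht
    have h1 := H t ht
    have e : a - (t • w + (1 - t) • y) = (a - y) - t • (w - y) := by module
    rw [e] at h1
    have h2 := pow_le_pow_left₀ (norm_nonneg _) h1 2
    rw [norm_sub_sq_real (a - y) (t • (w - y)), inner_smul_right, norm_smul,
      Real.norm_of_nonneg ht.1.le] at h2
    have h3 : 0 ≤ t * (t * ‖w - y‖ ^ 2 - 2 * inner ℝ (a - y) (w - y)) := by nlinarith
    have := nonneg_of_mul_nonneg_right h3 ht.1
    linarith
  have hin : 2 * inner ℝ (a - y) (w - y) ≤ 0 := by
    have hT : Tendsto (fun t : ℝ => t * ‖w - y‖ ^ 2) (𝓝[>] 0) (𝓝 (0 * ‖w - y‖ ^ 2)) :=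
      ((continuous_id.mul continuous_const).tendsto _).mono_left nhdsWithin_le_nhds
    rw [zero_mul] at hT
    refine ge_of_tendsto hT ?_
    filter_upwards [Ioc_mem_nhdsGT (show (0:ℝ) < 1 by norm_num)] with t ht using key t ht
  have e : a - w = (a - y) - (w - y) := by abel
  have h2 := norm_sub_sq_real (a - y) (w - y)
  rw [← e] at h2
  rw [norm_sub_rev y w]
  refine (sq_le_sq₀ (norm_nonneg _) (norm_nonneg _)).1 ?_
  nlinarith [sq_nonneg ‖a - y‖]

/-- basic convergence analysis of HiPPA.  Let `h` be proper, lsc and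
`(κ,γ)`-strongly quasar-convex w.r.t. a minimizer `xbar` (`κ ∈ (0,1]`, `γ ≥ 0`), `p > 1`,
`0 < β' ≤ β k ≤ β''`, and `x (k+1) ∈ prox_h^{β k, p}(x k)`.  Then:
(a) `{h (x k)}` is nonincreasing;
(b) `∑ₖ ‖x (k+1) - x k‖^p < ∞`;
(c) `{‖x k - xbar‖}` is nonincreasing (Fejér monotonicity), so `{x k}` is bounded;
(d) `h (x k) → h xbar = min h`. -/
theorem hippa_convergence_analysis {n : ℕ}
    (dom : Set (EuclideanSpace ℝ (Fin n))) (h : EuclideanSpace ℝ (Fin n) → ℝ)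
    (hdom : Convex ℝ dom) (hne : dom.Nonempty)
    (hlsc : LowerSemicontinuous
      (fun z => if z ∈ dom then ((h z : ℝ) : EReal) else (⊤ : EReal)))
    (xbar : EuclideanSpace ℝ (Fin n)) (hxbar : xbar ∈ dom)
    (hmin : ∀ y ∈ dom, h xbar ≤ h y)
    (κ γ : ℝ) (hκ : κ ∈ Ioc (0:ℝ) 1) (hγ : 0 ≤ γ)
    (hsqc : StronglyQuasarConvexOn dom h κ γ xbar)
    (p : ℝ) (hp : 1 < p)
    (β' β'' : ℝ) (hβ' : 0 < β')
    (β : ℕ → ℝ) (hβ : ∀ k, β' ≤ β k ∧ β k ≤ β'')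
    (x : ℕ → EuclideanSpace ℝ (Fin n)) (hx0 : x 0 ∈ dom)
    (hstep : ∀ k, x (k + 1) ∈ hoProx dom h (β k) p (x k)) :
    (∀ k, h (x (k + 1)) ≤ h (x k)) ∧
    Summable (fun k => ‖x (k + 1) - x k‖ ^ p) ∧
    ((∀ k, ‖x (k + 1) - xbar‖ ≤ ‖x k - xbar‖) ∧ Bornology.IsBounded (Set.range x)) ∧
    Filter.Tendsto (fun k => h (x k)) Filter.atTop (𝓝 (h xbar)) := by
  obtain ⟨hκ0, hκ1⟩ := hκ
  have hp0 : 0 < p := by linarith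
  have hβpos : ∀ k, 0 < β k := fun k => hβ'.trans_le (hβ k).1
  have hβ''pos : 0 < β'' := (hβpos 0).trans_le (hβ 0).2
  have hxd : ∀ k, x k ∈ dom := by
    intro k
    cases k with
    | zero => exact hx0
    | succ k => exact (hstep k).1
  have hcpos : ∀ k, 0 < 1 / (p * β k) := fun k => by have := hβpos k; positivity
  have hdesc : ∀ k, h (x (k + 1)) + 1 / (p * β k) * ‖x (k + 1) - x k‖ ^ p ≤ h (x k) := by
    intro k
    have := (hstep k).2 (x k) (hxd k)
    rw [sub_self, norm_zero, Real.zero_rpow hp0.ne', norm_sub_rev] at this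
    linarith
  have hmono : ∀ k, h (x (k + 1)) ≤ h (x k) := by
    intro k
    have := mul_nonneg (hcpos k).le (Real.rpow_nonneg (norm_nonneg (x (k + 1) - x k)) p)
    linarith [hdesc k]
  have hsum : Summable (fun k => ‖x (k + 1) - x k‖ ^ p) := by
    refine summable_of_sum_range_le (c := p * β'' * (h (x 0) - h xbar))
      (fun k => by positivity) ?_
    have tele : ∀ N, ∑ k ∈ Finset.range N, ‖x (k + 1) - x k‖ ^ p
        ≤ p * β'' * (h (x 0) - h (x N)) := by
      intro N
      induction N with
      | zero => simp
      | succ N ih =>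
        rw [Finset.sum_range_succ]
        have h0 : 0 ≤ ‖x (N + 1) - x N‖ ^ p := by positivity
        have h1 := hdesc N
        have h2 : 1 / (p * β'') ≤ 1 / (p * β N) :=
          one_div_le_one_div_of_le (mul_pos hp0 (hβpos N))
            (mul_le_mul_of_nonneg_left (hβ N).2 hp0.le)
        have h3 : 1 / (p * β'') * ‖x (N + 1) - x N‖ ^ p ≤ h (x N) - h (x (N + 1)) := by
          have := mul_le_mul_of_nonneg_right h2 h0
          linarith
        have h4 : ‖x (N + 1) - x N‖ ^ p ≤ p * β'' * (h (x N) - h (x (N + 1))) := by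
          have h5 : 0 < p * β'' := by positivity
          rwa [one_div, inv_mul_le_iff₀ h5] at h3
        linarith
    intro N
    refine (tele N).trans (mul_le_mul_of_nonneg_left ?_ (by positivity))
    linarith [hmin _ (hxd N)]
  -- Minimality tested against the segment from `x (k+1)` to `xbar`; the strong-convexity
  -- remainder is nonnegative because `t ≤ 1 ≤ 2 - κ`.
  have hseg : ∀ k, ∀ t ∈ Ioc (0:ℝ) 1,
      κ * t * (h (x (k + 1)) - h xbar) + 1 / (p * β k) * ‖x k - x (k + 1)‖ ^ p
        ≤ 1 / (p * β k) * ‖x k - (t • xbar + (1 - t) • x (k + 1))‖ ^ p := by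
    intro k t ht
    have hz : t • xbar + (1 - t) • x (k + 1) ∈ dom :=
      hdom hxbar (hxd (k + 1)) ht.1.le (by linarith [ht.2]) (by ring)
    have h1 := (hstep k).2 _ hz
    have h2 := hsqc (x (k + 1)) (hxd (k + 1)) t ⟨ht.1.le, ht.2⟩
    have h3 : 0 ≤ t * (1 - t / (2 - κ)) * (κ * γ / 2) * ‖x (k + 1) - xbar‖ ^ 2 := by
      have : t / (2 - κ) ≤ 1 := by
        rw [div_le_one (by linarith)]
        linarith [ht.2]
      have h4 : 0 ≤ 1 - t / (2 - κ) := by linarith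
      have := ht.1
      positivity
    linarith
  have hfej : ∀ k, ‖x (k + 1) - xbar‖ ≤ ‖x k - xbar‖ := by
    intro k
    apply norm_sub_le_of_segment
    intro t ht
    have h1 := hseg k t ht
    have h2 : 0 ≤ κ * t * (h (x (k + 1)) - h xbar) :=
      mul_nonneg (mul_nonneg hκ0.le ht.1.le) (by linarith [hmin _ (hxd (k + 1))])
    have h3 : ‖x k - x (k + 1)‖ ^ p ≤ ‖x k - (t • xbar + (1 - t) • x (k + 1))‖ ^ p :=
      le_of_mul_le_mul_left (by linarith) (hcpos k)
    exact (Real.rpow_le_rpow_iff (norm_nonneg _) (norm_nonneg _) hp0).1 h3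
  have hD : ∀ k, ‖x k - xbar‖ ≤ ‖x 0 - xbar‖ := fun k =>
    antitone_nat_of_succ_le (f := fun k => ‖x k - xbar‖) hfej (Nat.zero_le k)
  refine ⟨hmono, hsum, ⟨hfej, ?_⟩, ?_⟩
  · refine (Metric.isBounded_closedBall (x := xbar) (r := ‖x 0 - xbar‖)).subset ?_
    rintro _ ⟨k, rfl⟩
    rw [Metric.mem_closedBall, dist_eq_norm]
    exact hD k
  · have hbdd : BddBelow (range fun k => h (x k)) :=
      ⟨h xbar, by rintro _ ⟨k, rfl⟩; exact hmin _ (hxd k)⟩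
    have hL := tendsto_atTop_ciInf (antitone_nat_of_succ_le (f := fun k => h (x k)) hmono) hbdd
    set L := ⨅ k, h (x k) with hLdef
    have hLge : h xbar ≤ L := le_ciInf fun k => hmin _ (hxd k)
    have hd : Tendsto (fun k => ‖x k - x (k + 1)‖) atTop (𝓝 0) := by
      have h1 := hsum.tendsto_atTop_zero.rpow_const (p := p⁻¹) (Or.inr (by positivity))
      rw [Real.zero_rpow (inv_ne_zero hp0.ne')] at h1
      refine h1.congr fun k => ?_
      rw [Real.rpow_rpow_inv (norm_nonneg _) hp0.ne', norm_sub_rev]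
    set D := ‖x 0 - xbar‖ with hDdef
    have hD0 : 0 ≤ D := norm_nonneg _
    have hbound : ∀ t ∈ Ioc (0:ℝ) 1, κ * t * (L - h xbar) ≤ 1 / (p * β') * (t * D) ^ p := by
      intro t ht
      have hk : ∀ k, κ * t * (h (x (k + 1)) - h xbar)
          ≤ 1 / (p * β') * (‖x k - x (k + 1)‖ + t * D) ^ p := by
        intro k
        have h1 := hseg k t ht
        have h2 : ‖x k - (t • xbar + (1 - t) • x (k + 1))‖ ≤ ‖x k - x (k + 1)‖ + t * D := by
          have e : x k - (t • xbar + (1 - t) • x (k + 1))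
              = (x k - x (k + 1)) + t • (x (k + 1) - xbar) := by module
          rw [e]
          refine (norm_add_le _ _).trans ?_
          rw [norm_smul, Real.norm_of_nonneg ht.1.le]
          have := mul_le_mul_of_nonneg_left (hD (k + 1)) ht.1.le
          linarith
        have h3 := Real.rpow_le_rpow (norm_nonneg _) h2 hp0.le
        have h4 : 1 / (p * β k) ≤ 1 / (p * β') :=
          one_div_le_one_div_of_le (mul_pos hp0 hβ')
            (mul_le_mul_of_nonneg_left (hβ k).1 hp0.le)
        have h5 := mul_le_mul h4 h3 (by positivity) (by positivity)
        have h6 := mul_nonneg (hcpos k).le (Real.rpow_nonneg (norm_nonneg (x k - x (k + 1))) p)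
        linarith
      have hl : Tendsto (fun k => κ * t * (h (x (k + 1)) - h xbar)) atTop
          (𝓝 (κ * t * (L - h xbar))) :=
        (((tendsto_add_atTop_iff_nat 1).2 hL).sub_const _).const_mul _
      have hr : Tendsto (fun k => 1 / (p * β') * (‖x k - x (k + 1)‖ + t * D) ^ p) atTop
          (𝓝 (1 / (p * β') * (0 + t * D) ^ p)) :=
        ((hd.add_const _).rpow_const (Or.inr hp0.le)).const_mul _
      rw [zero_add] at hr
      exact le_of_tendsto_of_tendsto' hl hr hk
    have hdiv : ∀ t ∈ Ioc (0:ℝ) 1, κ * (L - h xbar) ≤ 1 / (p * β') * D ^ p * t ^ (p - 1) := by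
      intro t ht
      have h1 := hbound t ht
      have h2 : t ^ p = t ^ (p - 1) * t := by
        rw [← Real.rpow_add_one ht.1.ne', sub_add_cancel]
      rw [Real.mul_rpow ht.1.le hD0, h2] at h1
      refine le_of_mul_le_mul_right ?_ ht.1
      linarith
    have hLle : κ * (L - h xbar) ≤ 0 := by
      have hT : Tendsto (fun t : ℝ => 1 / (p * β') * D ^ p * t ^ (p - 1)) (𝓝[>] 0)
          (𝓝 (1 / (p * β') * D ^ p * 0 ^ (p - 1))) :=
        ((tendsto_id.mono_left nhdsWithin_le_nhds).rpow_const
          (Or.inr (by linarith))).const_mul _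
      rw [Real.zero_rpow (by linarith), mul_zero] at hT
      refine ge_of_tendsto hT ?_
      filter_upwards [Ioc_mem_nhdsGT (show (0:ℝ) < 1 by norm_num)] with t ht using hdiv t ht
    have hLeq : L = h xbar := by nlinarith
    rwa [hLeq] at hL
end

section
/- Let h : ℝⁿ → ℝ ∪ {+∞} be a proper, lower semicontinuous function that is (κ,γ)-strongly quasar-convex with respect to its unique minimizer x̄ ∈ argmin h, with κ ∈ (0,1] and γ > 0. Let p > 2, let 0 < β' ≤ β_k ≤ β'' for all k, and let {x^k} satisfy x^{k+1} ∈ prox_h^{β_k,p}(x^k) for all k ≥ 0. Then the convergence is superlinear of order p − 1: for every k ≥ 0, ‖x^{k+1} − x̄‖ ≤ c·‖x^k − x̄‖^{p−1}, where c := (2−κ)/(β'·κγ). -/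
/-!
Let `y` be a proximal point of `w`. Comparing `y` with `t • xbar + (1 - t) • y` in the proximal
problem, bounding `h` there by strong quasar-convexity and letting `t → 0⁺` gives
`κ (h y - h xbar) + (κ γ / 2) ‖y - xbar‖² ≤ β⁻¹ ‖w - y‖^(p-2) ⟪w - y, y - xbar⟫`.
Strong quasar-convexity also yields quadratic growth,
`h y - h xbar ≥ κ γ / (2 (2 - κ)) ‖y - xbar‖²`, so the left side is at least
`κ γ / (2 - κ) ‖y - xbar‖²` (`hoProx_inner_bound`). By Cauchy-Schwarz,
`‖y - xbar‖ ≤ (2 - κ) / (β κ γ) ‖w - y‖^(p-1)`; the inner product being nonnegative,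
`‖w - y‖ ≤ ‖w - xbar‖`, which gives the rate.
-/

open Set Filter Topology
open scoped Classical

/-- One-sided Fermat rule: a minimum over `[0,1]` attained at `0` forces a nonnegative derivative. -/
lemma deriv_nonneg_of_min_left {g : ℝ → ℝ} {g' : ℝ} (hg : HasDerivAt g g' 0)
    (hmin : ∀ t ∈ Icc (0:ℝ) 1, g 0 ≤ g t) : 0 ≤ g' := by
  refine ge_of_tendsto hg.tendsto_slope_zero_right ?_
  filter_upwards [Ioo_mem_nhdsGT (zero_lt_one (α := ℝ))] with t ht
  have h1 := hmin t ⟨ht.1.le, ht.2.le⟩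
  rw [zero_add, smul_eq_mul]
  exact mul_nonneg (inv_nonneg.mpr ht.1.le) (sub_nonneg.mpr h1)

/-- Quadratic growth at the minimizer. Testing quasar-convexity at `t = 1` gives this only for
`κ < 1`, hence the limit `t → 1` in the remaining case. -/
lemma StronglyQuasarConvexOn.quadratic_growth {n : ℕ}
    {dom : Set (EuclideanSpace ℝ (Fin n))} {h : EuclideanSpace ℝ (Fin n) → ℝ}
    (hdom : Convex ℝ dom) {xbar : EuclideanSpace ℝ (Fin n)} (hxbar : xbar ∈ dom)
    (hmin : ∀ y ∈ dom, h xbar ≤ h y) {κ γ : ℝ} (hκ : κ ∈ Ioc (0:ℝ) 1)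
    (hsqc : StronglyQuasarConvexOn dom h κ γ xbar)
    {y : EuclideanSpace ℝ (Fin n)} (hy : y ∈ dom) :
    κ * γ / 2 * ‖y - xbar‖ ^ 2 ≤ (2 - κ) * (h y - h xbar) := by
  obtain ⟨hκ0, hκ1⟩ := hκ
  have key : ∀ t ∈ Icc (0:ℝ) 1, t * (1 - t / (2 - κ)) * (κ * γ / 2) * ‖y - xbar‖ ^ 2
      ≤ (1 - κ * t) * (h y - h xbar) := by
    intro t ht
    have h1 := hsqc y hy t ht
    have h2 := hmin _ (hdom hxbar hy ht.1 (sub_nonneg.mpr ht.2) (by ring))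
    linarith
  rcases hκ1.lt_or_eq with hlt | rfl
  · have h1 := key 1 ⟨zero_le_one, le_rfl⟩
    have h2 : (1 - 1 / (2 - κ)) = (1 - κ) / (2 - κ) := by
      field_simp [show (2 - κ) ≠ 0 by linarith]
      ring
    have h3 : (0:ℝ) < 2 - κ := by linarith
    rw [h2] at h1
    have h4 : (1 - κ) * (κ * γ / 2 * ‖y - xbar‖ ^ 2) ≤ (1 - κ) * ((2 - κ) * (h y - h xbar)) := by
      have h5 := mul_le_mul_of_nonneg_left h1 h3.le
      have h6 : (2 - κ) * (1 * ((1 - κ) / (2 - κ)) * (κ * γ / 2) * ‖y - xbar‖ ^ 2)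
          = (1 - κ) * (κ * γ / 2 * ‖y - xbar‖ ^ 2) := by
        field_simp
      rw [h6] at h5
      linarith
    exact le_of_mul_le_mul_left h4 (by linarith)
  · have ht : Tendsto (fun t : ℝ => t * (1 * γ / 2 * ‖y - xbar‖ ^ 2)) (𝓝[<] 1)
        (𝓝 (1 * (1 * γ / 2 * ‖y - xbar‖ ^ 2))) :=
      (Continuous.tendsto (by fun_prop) 1).mono_left nhdsWithin_le_nhds
    have h1 : 1 * (1 * γ / 2 * ‖y - xbar‖ ^ 2) ≤ h y - h xbar := by
      refine le_of_tendsto ht ?_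
      filter_upwards [Ioo_mem_nhdsLT (zero_lt_one (α := ℝ))] with t ht
      have h2 := key t ⟨ht.1.le, ht.2.le⟩
      have h3 : (0:ℝ) < 1 - t := by linarith [ht.2]
      refine le_of_mul_le_mul_left ?_ h3
      norm_num at h2 ⊢
      linarith
    linarith

/-- First-order optimality of a proximal point along the segment towards the minimizer, combined
with quadratic growth. -/
lemma hoProx_inner_bound {n : ℕ}
    {dom : Set (EuclideanSpace ℝ (Fin n))} {h : EuclideanSpace ℝ (Fin n) → ℝ}
    (hdom : Convex ℝ dom) {xbar : EuclideanSpace ℝ (Fin n)} (hxbar : xbar ∈ dom)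
    (hmin : ∀ y ∈ dom, h xbar ≤ h y) {κ γ : ℝ} (hκ : κ ∈ Ioc (0:ℝ) 1)
    (hsqc : StronglyQuasarConvexOn dom h κ γ xbar)
    {p : ℝ} (hp : 2 < p) {β : ℝ} (hβ : 0 < β) {x y : EuclideanSpace ℝ (Fin n)}
    (hy : y ∈ hoProx dom h β p x) :
    β * (κ * γ) * ‖y - xbar‖ ^ 2
      ≤ (2 - κ) * (‖x - y‖ ^ (p - 2) * inner ℝ (x - y) (y - xbar)) := by
  obtain ⟨hyd, hyopt⟩ := hy
  have hgrow := hsqc.quadratic_growth hdom hxbar hmin hκ hyd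
  obtain ⟨hκ0, hκ1⟩ := hκ
  have hφ : HasDerivAt (fun t : ℝ => ‖(x - y) + t • (y - xbar)‖ ^ p)
      (p * ‖x - y‖ ^ (p - 2) * inner ℝ (x - y) (y - xbar)) 0 := by
    have h1 : HasDerivAt (fun t : ℝ => (x - y) + t • (y - xbar)) (y - xbar) 0 := by
      simpa using ((hasDerivAt_id (0:ℝ)).smul_const (y - xbar)).const_add (x - y)
    have h2 := hasFDerivAt_norm_rpow ((x - y) + (0:ℝ) • (y - xbar)) (p := p) (by linarith)
    have h3 := h2.comp_hasDerivAt (0:ℝ) h1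
    simpa [Function.comp_def, inner_sub_left] using h3
  have hq : HasDerivAt (fun t : ℝ => κ * t * (h y - h xbar)
        + t * (1 - t / (2 - κ)) * (κ * γ / 2) * ‖y - xbar‖ ^ 2)
      (κ * (h y - h xbar) + κ * γ / 2 * ‖y - xbar‖ ^ 2) 0 := by
    have hid := hasDerivAt_id (0:ℝ)
    have h1 := ((hid.const_mul κ).mul_const (h y - h xbar)).add
      (((hid.mul ((hid.div_const (2 - κ)).const_sub 1)).mul_const (κ * γ / 2)).mul_const
        (‖y - xbar‖ ^ 2))
    refine h1.congr_deriv ?_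
    simp
  have hnn := deriv_nonneg_of_min_left ((hφ.const_mul (1 / (p * β))).sub hq) (by
    intro t ht
    have h1 := hyopt _ (hdom hxbar hyd ht.1 (sub_nonneg.mpr ht.2) (by ring))
    have h2 := hsqc y hyd t ht
    have h3 : x - (t • xbar + (1 - t) • y) = (x - y) + t • (y - xbar) := by module
    rw [h3] at h1
    simp only [Pi.sub_apply, zero_smul, add_zero, mul_zero, zero_mul, sub_zero]
    linarith)
  have hp0 : p ≠ 0 := by linarith
  have h4 : 1 / (p * β) * (p * ‖x - y‖ ^ (p - 2) * inner ℝ (x - y) (y - xbar))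
      = (‖x - y‖ ^ (p - 2) * inner ℝ (x - y) (y - xbar)) / β := by
    field_simp
  rw [h4, sub_nonneg, le_div_iff₀ hβ] at hnn
  have h5 := mul_le_mul_of_nonneg_left hnn (show 0 ≤ 2 - κ by linarith)
  have h6 := mul_le_mul_of_nonneg_left hgrow (mul_pos hκ0 hβ).le
  linarith

/-- superlinear convergence of HiPPA for `p > 2`.  Let `h` be proper,
lsc and `(κ,γ)`-strongly quasar-convex with respect to its unique minimizer `xbar`, with
`κ ∈ (0,1]`, `γ > 0`.  Let `p > 2`, `0 < β' ≤ β k ≤ β''`, and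
`x (k+1) ∈ prox_h^{β k, p}(x k)`.  Then for every `k`,
`‖x (k+1) - xbar‖ ≤ c ‖x k - xbar‖^(p-1)`, where `c = (2-κ)/(β' κ γ)`. -/
theorem hippa_superlinear_rate {n : ℕ}
    (dom : Set (EuclideanSpace ℝ (Fin n))) (h : EuclideanSpace ℝ (Fin n) → ℝ)
    (hdom : Convex ℝ dom) (hne : dom.Nonempty)
    (hlsc : LowerSemicontinuous
      (fun z => if z ∈ dom then ((h z : ℝ) : EReal) else (⊤ : EReal)))
    (xbar : EuclideanSpace ℝ (Fin n)) (hxbar : xbar ∈ dom)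
    (hmin : ∀ y ∈ dom, h xbar ≤ h y)
    (huniq : ∀ z ∈ dom, (∀ y ∈ dom, h z ≤ h y) → z = xbar)
    (κ γ : ℝ) (hκ : κ ∈ Ioc (0:ℝ) 1) (hγ : 0 < γ)
    (hsqc : StronglyQuasarConvexOn dom h κ γ xbar)
    (p : ℝ) (hp : 2 < p)
    (β' β'' : ℝ) (hβ' : 0 < β')
    (β : ℕ → ℝ) (hβ : ∀ k, β' ≤ β k ∧ β k ≤ β'')
    (x : ℕ → EuclideanSpace ℝ (Fin n))
    (hstep : ∀ k, x (k + 1) ∈ hoProx dom h (β k) p (x k)) :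
    ∀ k : ℕ, ‖x (k + 1) - xbar‖ ≤ (2 - κ) / (β' * (κ * γ)) * ‖x k - xbar‖ ^ (p - 1) := by
  intro k
  have hy := hstep k
  have hβk := (hβ k).1
  generalize x (k + 1) = y at hy ⊢
  generalize x k = w at hy ⊢
  generalize β k = b at hy hβk
  have hb : 0 < b := hβ'.trans_le hβk
  have key := hoProx_inner_bound hdom hxbar hmin hκ hsqc hp hb hy
  obtain ⟨hκ0, hκ1⟩ := hκ
  have h2κ : 0 < 2 - κ := by linarith
  have hκγ : 0 < κ * γ := mul_pos hκ0 hγ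
  rcases (norm_nonneg (y - xbar)).eq_or_lt with hD | hD
  · rw [← hD]
    positivity
  have hr : 0 ≤ ‖w - y‖ ^ (p - 2) := by positivity
  have hprod : 0 < ‖w - y‖ ^ (p - 2) * inner ℝ (w - y) (y - xbar) :=
    pos_of_mul_pos_right (lt_of_lt_of_le (by positivity) key) h2κ.le
  have hinner : 0 < inner ℝ (w - y) (y - xbar) := pos_of_mul_pos_right hprod hr
  -- The angle at `y` is obtuse, so the step is no longer than the distance to the minimizer.
  have hle : ‖w - y‖ ≤ ‖w - xbar‖ := by
    have h1 := norm_add_sq_real (w - y) (y - xbar)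
    rw [sub_add_sub_cancel] at h1
    exact le_of_sq_le_sq (by nlinarith) (norm_nonneg _)
  have hwy : 0 < ‖w - y‖ := by
    refine norm_pos_iff.mpr fun h0 => ?_
    simp [h0] at hinner
  have hpow : ‖w - y‖ ^ (p - 2) * ‖w - y‖ = ‖w - y‖ ^ (p - 1) := by
    rw [← Real.rpow_add_one hwy.ne']
    congr 1
    ring
  have hcs : ‖w - y‖ ^ (p - 2) * inner ℝ (w - y) (y - xbar)
      ≤ ‖w - y‖ ^ (p - 1) * ‖y - xbar‖ := by
    rw [← hpow, mul_assoc]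
    exact mul_le_mul_of_nonneg_left (real_inner_le_norm _ _) hr
  have hmono : ‖w - y‖ ^ (p - 1) ≤ ‖w - xbar‖ ^ (p - 1) :=
    Real.rpow_le_rpow (norm_nonneg _) hle (by linarith)
  have h1 : b * (κ * γ) * ‖y - xbar‖ ≤ (2 - κ) * ‖w - y‖ ^ (p - 1) := by
    refine le_of_mul_le_mul_right ?_ hD
    have := mul_le_mul_of_nonneg_left hcs h2κ.le
    linarith
  have h2 : β' * (κ * γ) * ‖y - xbar‖ ≤ b * (κ * γ) * ‖y - xbar‖ := by gcongr
  have h3 := mul_le_mul_of_nonneg_left hmono h2κ.le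
  rw [div_mul_eq_mul_div, le_div_iff₀ (by positivity)]
  linarith
end

section
/- Let h : ℝⁿ → ℝ ∪ {+∞} be a proper, lower semicontinuous function that is κ-quasar-convex (κ ∈ (0,1], γ = 0) with respect to every element of argmin h. Let p > 2, let 0 < β' ≤ β_k ≤ β'' for all k, and let {x^k} satisfy x^{k+1} ∈ prox_h^{β_k,p}(x^k) for all k ≥ 0, and assume x^k → x̄ ∈ argmin h. Then for every k ∈ ℕ (k ≥ 1): h(x^k) − h(x̄) ≤ (1/(β'·κ·p)) · ((p−2)/p)^{(p−2)/2} · ‖x⁰ − x̄‖^p / k^{p/2}. -/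
/-!
Write `q = p / 2`, `Δ j = h (x j) - h xbar`, `D j = ‖x j - xbar‖`, `a j = ‖x j - x (j+1)‖ ^ 2`.
Comparing the proximal minimiser `x (j+1)` with the points `x (j+1) + t (xbar - x (j+1))` and letting
`t → 0⁺`, quasar-convexity gives the first-order inequality (`prox_first_order`)
`κ Δ (j+1) ≤ (D j ^ 2 - D (j+1) ^ 2 - a j) * a j ^ (q-1) / (2 β j)`.

The squared distances telescope, so for some `j < k` one has `D j ^ 2 - D (j+1) ^ 2 ≤ D 0 ^ 2 / k`.
For this `j`, maximising `a ↦ a ^ (q-1) * (M - a)` with `M = D 0 ^ 2 / k`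
(`rpow_mul_sub_le`, weighted AM-GM) bounds `Δ (j+1)` by the claimed quantity, and
`Δ k ≤ Δ (j+1)` because the function values decrease along the iteration.
-/

open Set Filter Topology
open scoped Classical

/-- The maximum of `a ↦ a ^ (q-1) * (M - a)` over `a ≥ 0`, attained at `a = (q-1) M / q`. -/
lemma rpow_mul_sub_le {q a M : ℝ} (hq : 1 < q) (ha : 0 ≤ a) (hM : 0 ≤ M) :
    a ^ (q - 1) * (M - a) ≤ 1 / q * ((q - 1) / q) ^ (q - 1) * M ^ q := by
  have hq0 : 0 < q := by linarith
  have hq1 : 0 < q - 1 := by linarith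
  rcases le_or_gt M a with h | h
  · have h1 : a ^ (q - 1) * (M - a) ≤ 0 :=
      mul_nonpos_of_nonneg_of_nonpos (by positivity) (by linarith)
    exact h1.trans (by positivity)
  · have hMa : 0 < M - a := by linarith
    have hw : 0 < (q - 1) / q := by positivity
    -- weighted AM-GM with weights `(q-1)/q` and `1/q`
    have key := Real.geom_mean_le_arith_mean2_weighted (w₁ := (q - 1) / q) (w₂ := 1 / q)
      (p₁ := a / ((q - 1) / q)) (p₂ := q * (M - a)) hw.le (by positivity) (by positivity)
      (by positivity) (by field_simp; ring)
    have e : (q - 1) / q * (a / ((q - 1) / q)) + 1 / q * (q * (M - a)) = M := by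
      field_simp; ring
    rw [e] at key
    have key2 := Real.rpow_le_rpow (by positivity) key hq0.le
    rw [Real.mul_rpow (by positivity) (by positivity), ← Real.rpow_mul (by positivity),
      ← Real.rpow_mul (by positivity), div_mul_cancel₀ _ hq0.ne', div_mul_cancel₀ _ hq0.ne',
      Real.rpow_one, Real.div_rpow ha hw.le] at key2
    have hw' : 0 < ((q - 1) / q) ^ (q - 1) := by positivity
    calc a ^ (q - 1) * (M - a)
        = 1 / q * ((q - 1) / q) ^ (q - 1) *
          (a ^ (q - 1) / ((q - 1) / q) ^ (q - 1) * (q * (M - a))) := by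
          field_simp
      _ ≤ _ := by gcongr

/-- First-order consequence of proximal minimality along the segment from the proximal point `y`
to the minimiser `xbar`. -/
lemma prox_first_order {n : ℕ} {dom : Set (EuclideanSpace ℝ (Fin n))}
    {h : EuclideanSpace ℝ (Fin n) → ℝ} (hdom : Convex ℝ dom) {κ β p : ℝ} (hp : 2 < p)
    (hβ : 0 < β) {x y xbar : EuclideanSpace ℝ (Fin n)} (hxbar : xbar ∈ dom)
    (hqc : QuasarConvexOn dom h κ xbar) (hy : y ∈ hoProx dom h β p x) :
    κ * (h y - h xbar) ≤
      1 / (2 * β) * ((‖x - y‖ ^ 2) ^ (p / 2 - 1) *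
        (‖x - xbar‖ ^ 2 - ‖y - xbar‖ ^ 2 - ‖x - y‖ ^ 2)) := by
  obtain ⟨hyd, hymin⟩ := hy
  set a : ℝ := ‖x - y‖ ^ 2 with ha
  set b : ℝ := ‖x - xbar‖ ^ 2 - ‖y - xbar‖ ^ 2 - ‖x - y‖ ^ 2 with hb
  set c : ℝ := ‖y - xbar‖ ^ 2 with hc
  have hnp : ∀ v : EuclideanSpace ℝ (Fin n), ‖v‖ ^ p = (‖v‖ ^ 2) ^ (p / 2) := by
    intro v
    rw [← Real.rpow_natCast, ← Real.rpow_mul (norm_nonneg _)]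
    congr 1
    push_cast
    ring
  have hexp : ∀ t : ℝ, ‖x - (t • xbar + (1 - t) • y)‖ ^ 2 = a + b * t + c * t ^ 2 := by
    intro t
    have e1 : x - (t • xbar + (1 - t) • y) = (x - y) + t • (y - xbar) := by module
    have e2 : x - xbar = (x - y) + (y - xbar) := by abel
    rw [hb, e2, e1, norm_add_sq_real, norm_add_sq_real, norm_smul, inner_smul_right, mul_pow,
      Real.norm_eq_abs, sq_abs]
    ring
  set ψ : ℝ → ℝ := fun t =>
    1 / (p * β) * (a + b * t + c * t ^ 2) ^ (p / 2) - κ * (h y - h xbar) * t with hψ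
  have hmin : ∀ t ∈ Icc (0:ℝ) 1, ψ 0 ≤ ψ t := by
    intro t ht
    have hz : t • xbar + (1 - t) • y ∈ dom :=
      hdom hxbar hyd ht.1 (by linarith [ht.2]) (by ring)
    have h1 := hymin _ hz
    have h2 := hqc y hyd t ht
    rw [hnp, hnp, hexp] at h1
    simp only [hψ, mul_zero, add_zero, sub_zero, ne_eq, OfNat.ofNat_ne_zero, not_false_eq_true,
      zero_pow]
    nlinarith
  have hder : HasDerivAt ψ
      (1 / (p * β) * (b * (p / 2) * a ^ (p / 2 - 1)) - κ * (h y - h xbar)) 0 := by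
    have hpoly : HasDerivAt (fun t : ℝ => a + b * t + c * t ^ 2) b 0 := by
      have := (((hasDerivAt_id (0:ℝ)).const_mul b).const_add a).add
        (((hasDerivAt_id (0:ℝ)).pow 2).const_mul c)
      refine (this.congr_deriv (by simp)).congr_of_eventuallyEq (Eventually.of_forall ?_)
      intro t
      simp
    have hr := hpoly.rpow_const (p := p / 2) (Or.inr (by linarith))
    have := (hr.const_mul (1 / (p * β))).sub ((hasDerivAt_id (0:ℝ)).const_mul (κ * (h y - h xbar)))
    refine (this.congr_deriv (by simp)).congr_of_eventuallyEq (Eventually.of_forall ?_)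
    intro t
    simp [hψ]
  have hnn : 0 ≤ 1 / (p * β) * (b * (p / 2) * a ^ (p / 2 - 1)) - κ * (h y - h xbar) := by
    have ht := (hasDerivAt_iff_tendsto_slope.1 hder).mono_left
      (nhdsWithin_mono (0:ℝ) (fun t (ht : t ∈ Ioi (0:ℝ)) => ne_of_gt ht))
    refine ge_of_tendsto ht ?_
    filter_upwards [Ioo_mem_nhdsGT (zero_lt_one (α := ℝ))] with t ht
    rw [slope_def_field]
    exact div_nonneg (by linarith [hmin t ⟨ht.1.le, ht.2.le⟩]) (by linarith [ht.1])
  have hp0 : p ≠ 0 := by linarith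
  have e : 1 / (p * β) * (b * (p / 2) * a ^ (p / 2 - 1))
      = 1 / (2 * β) * (a ^ (p / 2 - 1) * b) := by
    field_simp
  linarith

/-- sublinear rate for function values, `γ = 0`, `p > 2`.  Let `h` be
proper, lsc and `κ`-quasar-convex with respect to every element of `argmin h`
(`κ ∈ (0,1]`).  Let `p > 2`, `0 < β' ≤ β k ≤ β''`, `x (k+1) ∈ prox_h^{β k, p}(x k)`, and
assume `x k → xbar ∈ argmin h`.  Then for every `k ≥ 1`,
`h (x k) - h xbar ≤ (1/(β' κ p)) ((p-2)/p)^((p-2)/2) ‖x⁰ - xbar‖^p / k^(p/2)`. -/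
theorem hippa_rate_function_values {n : ℕ}
    (dom : Set (EuclideanSpace ℝ (Fin n))) (h : EuclideanSpace ℝ (Fin n) → ℝ)
    (hdom : Convex ℝ dom) (hne : dom.Nonempty)
    (hlsc : LowerSemicontinuous
      (fun z => if z ∈ dom then ((h z : ℝ) : EReal) else (⊤ : EReal)))
    (κ : ℝ) (hκ : κ ∈ Ioc (0:ℝ) 1)
    (hqc : ∀ z ∈ dom, (∀ y ∈ dom, h z ≤ h y) → QuasarConvexOn dom h κ z)
    (p : ℝ) (hp : 2 < p)
    (β' β'' : ℝ) (hβ' : 0 < β')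
    (β : ℕ → ℝ) (hβ : ∀ k, β' ≤ β k ∧ β k ≤ β'')
    (x : ℕ → EuclideanSpace ℝ (Fin n)) (hx0 : x 0 ∈ dom)
    (hstep : ∀ k, x (k + 1) ∈ hoProx dom h (β k) p (x k))
    (xbar : EuclideanSpace ℝ (Fin n)) (hxbar : xbar ∈ dom)
    (hmin : ∀ y ∈ dom, h xbar ≤ h y)
    (hconv : Filter.Tendsto x Filter.atTop (𝓝 xbar)) :
    ∀ k : ℕ, 1 ≤ k →
      h (x k) - h xbar ≤
        1 / (β' * κ * p) * ((p - 2) / p) ^ ((p - 2) / 2) * ‖x 0 - xbar‖ ^ p /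
          (k : ℝ) ^ (p / 2) := by
  intro k hk
  have hβpos : ∀ j, 0 < β j := fun j => hβ'.trans_le (hβ j).1
  have hxd : ∀ j, x j ∈ dom := by
    intro j
    cases j with
    | zero => exact hx0
    | succ j => exact (hstep j).1
  have hp0 : 0 < p := by linarith
  have hκ0 := hκ.1
  have hanti : Antitone (fun j => h (x j)) := by
    refine antitone_nat_of_succ_le fun j => ?_
    have h1 := (hstep j).2 (x j) (hxd j)
    rw [sub_self, norm_zero, Real.zero_rpow hp0.ne', mul_zero, add_zero] at h1
    have h2 : 0 ≤ 1 / (p * β j) * ‖x j - x (j + 1)‖ ^ p := by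
      have := hβpos j
      positivity
    linarith
  have hk0 : (0:ℝ) < k := by exact_mod_cast hk
  set M : ℝ := ‖x 0 - xbar‖ ^ 2 / k with hM
  have hM0 : 0 ≤ M := by positivity
  obtain ⟨j, hj, hjM⟩ : ∃ j ∈ Finset.range k,
      ‖x j - xbar‖ ^ 2 - ‖x (j + 1) - xbar‖ ^ 2 ≤ M := by
    refine Finset.exists_le_of_sum_le (Finset.nonempty_range_iff.2 (by omega)) ?_
    rw [Finset.sum_range_sub' (fun j => ‖x j - xbar‖ ^ 2), Finset.sum_const, Finset.card_range,
      nsmul_eq_mul, hM, mul_div_cancel₀ _ hk0.ne']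
    linarith [sq_nonneg ‖x k - xbar‖]
  have hkj : h (x k) ≤ h (x (j + 1)) := hanti (Finset.mem_range.1 hj)
  have hfo := prox_first_order hdom hp (hβpos j) hxbar (hqc xbar hxbar hmin) (hstep j)
  set a : ℝ := ‖x j - x (j + 1)‖ ^ 2 with ha
  have ha0 : 0 ≤ a := by positivity
  have hmax := rpow_mul_sub_le (q := p / 2) (by linarith) ha0 hM0
  have hMp : M ^ (p / 2) = ‖x 0 - xbar‖ ^ p / (k : ℝ) ^ (p / 2) := by
    rw [hM, Real.div_rpow (by positivity) hk0.le, ← Real.rpow_natCast,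
      ← Real.rpow_mul (norm_nonneg _)]
    congr 2
    push_cast
    ring
  have e1 : (p / 2 - 1) / (p / 2) = (p - 2) / p := by field_simp
  have e2 : p / 2 - 1 = (p - 2) / 2 := by ring
  rw [e1, e2, hMp] at hmax
  rw [e2] at hfo
  set C : ℝ := ((p - 2) / p) ^ ((p - 2) / 2) with hC
  have hC0 : 0 ≤ C := Real.rpow_nonneg (div_nonneg (by linarith) hp0.le) _
  set N : ℝ := ‖x 0 - xbar‖ ^ p / (k : ℝ) ^ (p / 2) with hN
  have hN0 : 0 ≤ N := by positivity
  have hbj := (hβ j).1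
  have hchain : κ * (h (x k) - h xbar) ≤ 1 / (2 * β') * (1 / (p / 2) * C * N) := by
    calc κ * (h (x k) - h xbar) ≤ κ * (h (x (j + 1)) - h xbar) := by gcongr
      _ ≤ 1 / (2 * β j) * (a ^ ((p - 2) / 2) *
          (‖x j - xbar‖ ^ 2 - ‖x (j + 1) - xbar‖ ^ 2 - a)) := hfo
      _ ≤ 1 / (2 * β j) * (a ^ ((p - 2) / 2) * (M - a)) := by
          have := hβpos j
          gcongr
      _ ≤ 1 / (2 * β j) * (1 / (p / 2) * C * N) := by
          have := hβpos j
          gcongr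
      _ ≤ 1 / (2 * β') * (1 / (p / 2) * C * N) := by gcongr
  calc h (x k) - h xbar = κ * (h (x k) - h xbar) / κ := by field_simp
    _ ≤ 1 / (2 * β') * (1 / (p / 2) * C * N) / κ := by gcongr
    _ = 1 / (β' * κ * p) * C * N := by field_simp
    _ = _ := by rw [hN, mul_div_assoc]
end
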